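/- arXiv:1712.09223 — 2 statements merged into one kernel-verified Lean document; each statement's English description precedes it below -/
import Mathlib

section
/- Let V be a finite-dimensional real normed vector space, C ⊆ V a solid closed cone, Ω ⊆ V an open set, and f : Ω → Ω a homeomorphism that is monotone with respect to C such that Per(f) is dense in Ω. Then for every x ∈ Ω, the set Per(f) of periodic points of f is dense in (x + ∂C) ∩ Ω and dense in (x − ∂C) ∩ Ω, where ∂C denotes the topological boundary of C in V. -/
open Set Metric MeasureTheory Filter Topology

theorem aux_det_poly {E : Type*} [NormedAddCommGroup E] [NormedSpace ℝ E] [FiniteDimensional ℝ E]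
    (A : E →L[ℝ] E) : ∃ q : Polynomial ℝ, q.natDegree ≤ Module.finrank ℝ E ∧
      ∀ t : ℝ, q.eval t = (ContinuousLinearMap.id ℝ E + t • A).det := by
  classical
  let b := Module.finBasis ℝ E
  let M := LinearMap.toMatrix b b (A : E →ₗ[ℝ] E)
  refine ⟨((Polynomial.X : Polynomial ℝ) • M.map Polynomial.C + (1 : Matrix (Fin (Module.finrank ℝ E)) (Fin (Module.finrank ℝ E)) ℝ).map Polynomial.C).det, ?_, ?_⟩
  · simpa using Polynomial.natDegree_det_X_add_C_le M 1
  · intro t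
    rw [ContinuousLinearMap.det, ← LinearMap.det_toMatrix b, ← Polynomial.coe_evalRingHom, RingHom.map_det]
    congr 1
    ext i j
    simp [M, LinearMap.toMatrix_apply, Matrix.one_apply, Finsupp.single_apply, eq_comm]
    split_ifs <;> simp <;> ring

theorem aux_lagrange (n : ℕ) (ε : ℝ) (hε : 0 < ε) : ∃ w : ℕ → ℝ, ∀ q : Polynomial ℝ,
    q.natDegree ≤ n → q.eval 1 = ∑ i ∈ Finset.range (n+1), w i * q.eval (ε / (i+1)) := by
  classical
  let v : ℕ → ℝ := fun i => ε / (i+1)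
  refine ⟨fun i => (Lagrange.basis (Finset.range (n+1)) v i).eval 1, fun q hq => ?_⟩
  have hinj : Set.InjOn v (Finset.range (n+1) : Set ℕ) := by
    intro i _ j _ hij
    simp only [v] at hij
    have h1 : (0:ℝ) < i + 1 := by positivity
    have h2 : (0:ℝ) < j + 1 := by positivity
    rw [div_eq_div_iff h1.ne' h2.ne'] at hij
    have := mul_left_cancel₀ hε.ne' hij
    have h3 : (i:ℝ) = j := by linarith
    exact_mod_cast h3
  have hdeg : q.degree < ((Finset.range (n+1)).card : WithBot ℕ) := by
    refine lt_of_le_of_lt Polynomial.degree_le_natDegree ?_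
    simp only [Finset.card_range]
    exact_mod_cast Nat.lt_succ_of_le hq
  have h := Lagrange.eq_interpolate hinj hdeg
  conv_lhs => rw [h]
  rw [Lagrange.interpolate_apply, Polynomial.eval_finsetSum]
  refine Finset.sum_congr rfl fun i _ => ?_
  simp [v, mul_comm]

/-- Metric projection onto a closed convex set. -/
theorem aux_proj {E : Type*} [NormedAddCommGroup E] [InnerProductSpace ℝ E] [FiniteDimensional ℝ E]
    (K : Set E) (hne : K.Nonempty) (hcl : IsClosed K) (hc : Convex ℝ K) :
    ∃ π : E → E, (∀ x, π x ∈ K) ∧ (∀ x ∈ K, π x = x) ∧ LipschitzWith 1 π ∧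
      ∀ x, ∀ w ∈ K, inner ℝ (x - π x) (w - π x) ≤ 0 := by
  choose π h1 h2 using exists_norm_eq_iInf_of_complete_convex hne hcl.isComplete hc
  have h3 : ∀ x, ∀ w ∈ K, inner ℝ (x - π x) (w - π x) ≤ 0 := fun x =>
    (norm_eq_iInf_iff_real_inner_le_zero hc (h1 x)).1 (h2 x)
  refine ⟨π, h1, ?_, ?_, h3⟩
  · intro x hx
    have := h3 x x hx
    rw [real_inner_self_eq_norm_sq] at this
    have h4 : ‖x - π x‖ = 0 := by nlinarith [norm_nonneg (x - π x)]
    exact (sub_eq_zero.1 (norm_eq_zero.1 h4)).symm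
  · refine LipschitzWith.of_dist_le_mul fun x y => ?_
    simp only [NNReal.coe_one, one_mul, dist_eq_norm]
    have a1 := h3 x (π y) (h1 y)
    have a2 := h3 y (π x) (h1 x)
    have e : inner ℝ (x - y) (π x - π y) = ‖π x - π y‖^2
        - inner ℝ (x - π x) (π y - π x) - inner ℝ (y - π y) (π x - π y) := by
      rw [← real_inner_self_eq_norm_sq]
      simp only [inner_sub_left, inner_sub_right]; ring
    have := real_inner_le_norm (x - y) (π x - π y)
    by_contra hlt
    push Not at hlt
    nlinarith [norm_nonneg (x-y), norm_nonneg (π x - π y)]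

theorem aux_no_retraction {E : Type*} [NormedAddCommGroup E] [InnerProductSpace ℝ E]
    [FiniteDimensional ℝ E] (r : E → E)
    (hr : ∀ x ∈ closedBall (0:E) 1, ContDiffAt ℝ 1 r x)
    (hr1 : ∀ x ∈ closedBall (0:E) 1, ‖r x‖ = 1)
    (hr2 : ∀ x, ‖x‖ = 1 → r x = x) (U : Set E) (hU : IsOpen U) (hBU : closedBall (0:E) 1 ⊆ U)
    (hrU : ∀ x ∈ U, ‖r x‖ = 1) : False := by
  classical
  let _ : MeasurableSpace E := borel E
  have : BorelSpace E := ⟨rfl⟩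
  set B := closedBall (0:E) 1 with hB
  have hBc : IsCompact B := isCompact_closedBall 0 1
  let A : E → E →L[ℝ] E := fun x => fderiv ℝ r x - ContinuousLinearMap.id ℝ E
  have hAc : ContinuousOn A B := fun x hx =>
    (((hr x hx).continuousAt_fderiv one_ne_zero).sub continuousAt_const).continuousWithinAt
  obtain ⟨K0, hK0⟩ := hBc.exists_bound_of_continuousOn hAc
  obtain ⟨K, hK, hKpos⟩ : ∃ K : NNReal, (∀ x ∈ B, ‖A x‖ ≤ K) ∧ 0 < K :=
    ⟨Real.toNNReal (max K0 1), fun x hx => ((hK0 x hx).trans (le_max_left _ _)).trans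
      (Real.le_coe_toNNReal _), Real.toNNReal_pos.2 (lt_of_lt_of_le one_pos (le_max_right _ _))⟩
  let g : E → E := fun x => r x - x
  have hgd : ∀ x ∈ B, HasFDerivAt g (A x) x := fun x hx =>
    (((hr x hx).differentiableAt one_ne_zero).hasFDerivAt).sub (hasFDerivAt_id x)
  have hgL : LipschitzOnWith K g B :=
    Convex.lipschitzOnWith_of_nnnorm_hasFDerivWithin_le (𝕜 := ℝ)
      (fun x hx => (hgd x hx).hasFDerivWithinAt) (fun x hx => by exact_mod_cast hK x hx)
      (convex_closedBall 0 1)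
  obtain ⟨π, hπ1, hπ2, hπL, hπ3⟩ := aux_proj B ⟨0, by simp [hB]⟩ isClosed_closedBall
    (convex_closedBall 0 1)
  have hgπ : LipschitzWith K (fun x => g (π x)) := by
    have := hgL.comp (hπL.lipschitzOnWith (s := univ)) (fun x _ => hπ1 x)
    simpa [Function.comp_def, lipschitzOnWith_univ] using this
  have hπ4 : ∀ x, x ∉ B → ‖π x‖ = 1 := by
    intro x hx
    have hle : ‖π x‖ ≤ 1 := by simpa [hB] using hπ1 x
    by_contra hne
    have hlt : ‖π x‖ < 1 := lt_of_le_of_ne hle hne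
    have hxp : x ≠ π x := fun h => hx (h ▸ hπ1 x)
    have hn : 0 < ‖x - π x‖ := norm_pos_iff.2 (sub_ne_zero.2 hxp)
    set s := (1 - ‖π x‖) / ‖x - π x‖ with hs
    have hspos : 0 < s := div_pos (by linarith) hn
    have hw : π x + s • (x - π x) ∈ B := by
      simp only [hB, mem_closedBall, dist_zero_right]
      refine (norm_add_le _ _).trans ?_
      rw [norm_smul, Real.norm_of_nonneg hspos.le, hs, div_mul_cancel₀ _ hn.ne']
      linarith
    have := hπ3 x _ hw
    rw [add_sub_cancel_left, inner_smul_right, real_inner_self_eq_norm_sq] at this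
    have : 0 < s * ‖x - π x‖^2 := by positivity
    linarith
  -- determinant positive near identity
  have hdet : ∀ᶠ M in 𝓝 (ContinuousLinearMap.id ℝ E), 0 < M.det := by
    have hc : ContinuousAt (fun M : E →L[ℝ] E => M.det) (ContinuousLinearMap.id ℝ E) :=
      ContinuousLinearMap.continuous_det.continuousAt
    refine hc.eventually (lt_mem_nhds ?_)
    simp [ContinuousLinearMap.det]
  obtain ⟨δ, hδ, hδdet⟩ := Metric.eventually_nhds_iff.1 hdet
  set ε : ℝ := min (1/2) (min (1 / (2 * K)) (δ / (2 * K))) with hε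
  have hKr : (0:ℝ) < K := by exact_mod_cast hKpos
  have hεpos : 0 < ε := by positivity
  have main : ∀ t : ℝ, 0 < t → t ≤ ε →
      ∫ x in B, (ContinuousLinearMap.id ℝ E + t • A x).det = volume.real B := by
    intro t ht htε
    have ht1 : t < 1 := by
      have : ε ≤ 1/2 := min_le_left _ _
      linarith
    have htK : t * K < 1 := by
      have : ε ≤ 1 / (2 * K) := (min_le_right _ _).trans (min_le_left _ _)
      have h2 : t * K ≤ 1 / (2 * K) * K := by gcongr; exact htε.trans this
      have : 1 / (2 * (K:ℝ)) * K = 1/2 := by field_simp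
      linarith
    have htδ : t * K < δ := by
      have : ε ≤ δ / (2 * K) := (min_le_right _ _).trans (min_le_right _ _)
      have h2 : t * K ≤ δ / (2 * K) * K := by gcongr; exact htε.trans this
      have : δ / (2 * (K:ℝ)) * K = δ/2 := by field_simp
      linarith
    let F : E → E := fun x => x + t • g x
    have hinj : InjOn F B := by
      intro x hx y hy hxy
      have h1 : x - y = t • (g y - g x) := by
        simp only [F] at hxy
        rw [smul_sub]
        have := sub_eq_zero.2 hxy
        rw [← sub_eq_zero, ← this]; abel
      have h2 := hgL.dist_le_mul y hy x hx
      rw [dist_eq_norm, dist_eq_norm] at h2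
      have h3 : ‖x - y‖ = t * ‖g y - g x‖ := by rw [h1, norm_smul, Real.norm_of_nonneg ht.le]
      rw [norm_sub_rev y x] at h2
      have h4 : ‖x - y‖ ≤ t * K * ‖x - y‖ := by
        calc _ = t * ‖g y - g x‖ := h3
          _ ≤ t * (K * ‖x - y‖) := by gcongr
          _ = _ := by ring
      have : ‖x - y‖ = 0 := by nlinarith [norm_nonneg (x - y)]
      exact sub_eq_zero.1 (norm_eq_zero.1 this)
    have himg : F '' B = B := by
      apply Subset.antisymm
      · rintro _ ⟨x, hx, rfl⟩
        have : F x = (1 - t) • x + t • r x := by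
          simp only [F, g, smul_sub, sub_smul, one_smul]; abel
        rw [this]
        refine convex_closedBall (0:E) 1 hx ?_ (by linarith) ht.le (by ring)
        simp [hr1 x hx]
      · intro y hy
        have hcon : ContractingWith (⟨t, ht.le⟩ * K) (fun x => y - t • g (π x)) := by
          refine ⟨by exact_mod_cast htK, LipschitzWith.of_dist_le_mul fun a b => ?_⟩
          have := hgπ.dist_le_mul a b
          simp only [dist_eq_norm] at this ⊢
          rw [sub_sub_sub_cancel_left, ← smul_sub, norm_smul, Real.norm_of_nonneg ht.le,
            norm_sub_rev]
          calc _ ≤ t * (K * ‖a - b‖) := by gcongr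
            _ = t * K * ‖a - b‖ := by ring
        obtain ⟨x, hx⟩ : ∃ x, y - t • g (π x) = x := ⟨_, hcon.fixedPoint_isFixedPt⟩
        by_cases hxB : x ∈ B
        · refine ⟨x, hxB, ?_⟩
          rw [hπ2 x hxB] at hx
          simp only [F]
          exact (sub_eq_iff_eq_add.1 hx).symm
        · exfalso
          have : g (π x) = 0 := by simp [g, hr2 _ (hπ4 x hxB)]
          rw [this] at hx
          simp only [smul_zero, sub_zero] at hx
          exact hxB (hx ▸ hy)
    have hcv := integral_image_eq_integral_abs_det_fderiv_smul (volume : Measure E)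
      isClosed_closedBall.measurableSet (f := F) (s := B)
      (f' := fun x => ContinuousLinearMap.id ℝ E + t • A x)
      (fun x hx => ((hasFDerivAt_id x).add ((hgd x hx).const_smul t)).hasFDerivWithinAt) hinj
      (fun _ => (1:ℝ))
    rw [himg] at hcv
    simp only [smul_eq_mul, mul_one, integral_const, MeasurableSet.univ, measureReal_restrict_apply,
      univ_inter] at hcv
    rw [hcv]
    refine setIntegral_congr_fun isClosed_closedBall.measurableSet fun x hx => ?_
    refine (abs_of_pos (hδdet ?_)).symm
    rw [dist_eq_norm, add_sub_cancel_left, norm_smul, Real.norm_of_nonneg ht.le]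
    calc _ ≤ t * K := by gcongr; exact hK x hx
      _ < δ := htδ
  obtain ⟨w, hw⟩ := aux_lagrange (Module.finrank ℝ E) ε hεpos
  have hw1 : (1:ℝ) = ∑ i ∈ Finset.range (Module.finrank ℝ E + 1), w i := by
    simpa using hw 1 (by simp)
  have hone : ∫ x in B, (ContinuousLinearMap.id ℝ E + (1:ℝ) • A x).det = volume.real B := by
    have h1 : ∀ x, (ContinuousLinearMap.id ℝ E + (1:ℝ) • A x).det =
        ∑ i ∈ Finset.range (Module.finrank ℝ E + 1), w i *
          (ContinuousLinearMap.id ℝ E + (ε / (i+1)) • A x).det := by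
      intro x
      obtain ⟨q, hq1, hq2⟩ := aux_det_poly (A x)
      simp only [← hq2]
      exact hw q hq1
    simp only [h1]
    rw [integral_finsetSum]
    · simp only [integral_const_mul]
      have : ∀ i ∈ Finset.range (Module.finrank ℝ E + 1), w i *
          ∫ x in B, (ContinuousLinearMap.id ℝ E + (ε / ((i:ℝ)+1)) • A x).det
          = w i * volume.real B := by
        intro i _
        rw [main _ (by positivity) (div_le_self hεpos.le (by linarith [Nat.cast_nonneg (α := ℝ) i]))]
      rw [Finset.sum_congr rfl this, ← Finset.sum_mul, ← hw1, one_mul]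
    · intro i _
      refine Integrable.const_mul ?_ _
      refine ContinuousOn.integrableOn_compact hBc ?_
      have hcc : ContinuousOn (fun x => ContinuousLinearMap.id ℝ E + (ε / ((i:ℝ)+1)) • A x) B := by
        fun_prop
      exact ContinuousLinearMap.continuous_det.comp_continuousOn hcc
  have hzero : ∫ x in B, (ContinuousLinearMap.id ℝ E + (1:ℝ) • A x).det = 0 := by
    rw [setIntegral_congr_fun isClosed_closedBall.measurableSet (g := fun _ => (0:ℝ))]
    · simp
    intro x hx
    have hD : ContinuousLinearMap.id ℝ E + (1:ℝ) • A x = fderiv ℝ r x := by simp [A]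
    simp only [hD]
    by_contra hne
    have hrd := ((hr x hx).differentiableAt one_ne_zero).hasFDerivAt
    have hort : ∀ h, inner ℝ (r x) (fderiv ℝ r x h) = 0 := by
      intro h
      have h1 := hrd.norm_sq
      have h2 : HasFDerivAt (fun y => ‖r y‖^2) (0 : E →L[ℝ] ℝ) x := by
        refine (hasFDerivAt_const (1:ℝ) x).congr_of_eventuallyEq ?_
        filter_upwards [hU.mem_nhds (hBU hx)] with y hy
        simp [hrU y hy]
      have := congrArg (fun L : E →L[ℝ] ℝ => L h) (h1.unique h2)
      simpa using this
    have hsurj : Function.Surjective (fderiv ℝ r x) := by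
      have hu : IsUnit (LinearMap.det (fderiv ℝ r x : E →ₗ[ℝ] E)) := isUnit_iff_ne_zero.2 hne
      exact ((Module.End.isUnit_iff _).1 ((LinearMap.isUnit_iff_isUnit_det _).2 hu)).2
    obtain ⟨h, hh⟩ := hsurj (r x)
    have h0 := hort h
    rw [hh, real_inner_self_eq_norm_sq, hr1 x hx] at h0
    norm_num at h0
  rw [hone] at hzero
  have : 0 < volume.real B := by
    rw [measureReal_def, ENNReal.toReal_pos_iff]
    exact ⟨measure_closedBall_pos _ _ one_pos, hBc.measure_lt_top⟩
  linarith

theorem aux_brouwer_ball {E : Type*} [NormedAddCommGroup E] [InnerProductSpace ℝ E]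
    [FiniteDimensional ℝ E] (F : E → E) (hF : Continuous F) (hF1 : ∀ x, ‖F x‖ ≤ 1) :
    ∃ x, F x = x := by
  by_contra hno
  push Not at hno
  obtain ⟨x0, hx0, hmin⟩ := (isCompact_closedBall (0:E) 1).exists_isMinOn ⟨0, by simp⟩
    (f := fun x => ‖F x - x‖) (by fun_prop)
  set δ : ℝ := ‖F x0 - x0‖ / 2 with hδ
  have hδpos : 0 < δ := by
    have : 0 < ‖F x0 - x0‖ := norm_pos_iff.2 (sub_ne_zero.2 (hno x0))
    positivity
  obtain ⟨P, hPs, hP, -⟩ := hF.exists_contDiff_approx (ε := fun _ => δ) 1 continuous_const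
    (fun _ => hδpos)
  let Q : E → E := fun x => (1 + δ)⁻¹ • P x
  have hQs : ContDiff ℝ 1 Q := hPs.const_smul _
  have hQ1 : ∀ x, ‖Q x‖ < 1 := by
    intro x
    have h1 : ‖P x‖ < 1 + δ := by
      have := hP x
      rw [dist_eq_norm] at this
      calc ‖P x‖ = ‖F x + (P x - F x)‖ := by congr 1; abel
        _ ≤ ‖F x‖ + ‖P x - F x‖ := norm_add_le _ _
        _ < 1 + δ := by linarith [hF1 x]
    simp only [Q]
    rw [norm_smul, Real.norm_of_nonneg (by positivity), inv_mul_lt_iff₀ (by positivity)]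
    linarith
  have hQx : ∀ x, ‖x‖ ≤ 1 → Q x ≠ x := by
    intro x hx hq
    have h1 : P x = (1 + δ) • x := by
      have h0 : (1 + δ) • Q x = P x := by
        simp only [Q]; rw [smul_smul, mul_inv_cancel₀ (by positivity), one_smul]
      rw [hq] at h0; exact h0.symm
    have h2 := hP x
    rw [dist_eq_norm, h1] at h2
    have h3 : ‖F x0 - x0‖ ≤ ‖F x - x‖ := hmin (by simpa using hx)
    have h4 : ‖F x - x‖ ≤ ‖(1+δ) • x - F x‖ + ‖δ • x‖ := by
      rw [← norm_neg ((1+δ) • x - F x)]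
      refine le_trans (le_of_eq ?_) (norm_add_le _ _)
      congr 1; rw [add_smul, one_smul]; abel
    rw [norm_smul, Real.norm_of_nonneg hδpos.le] at h4
    have : δ * ‖x‖ ≤ δ := by nlinarith
    linarith
  let u : E → E := fun x => x - Q x
  have hus : ContDiff ℝ 1 u := contDiff_id.sub hQs
  let a : E → ℝ := fun x => inner ℝ x (u x)
  have has : ContDiff ℝ 1 a := contDiff_id.inner ℝ hus
  let n : E → ℝ := fun x => ‖u x‖^2
  have hns : ContDiff ℝ 1 n := hus.norm_sq ℝ
  let d : E → ℝ := fun x => a x ^ 2 + n x * (1 - ‖x‖^2)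
  have hds : ContDiff ℝ 1 d := (has.pow 2).add (hns.mul (contDiff_const.sub (contDiff_id.norm_sq ℝ)))
  let l : E → ℝ := fun x => (-a x + Real.sqrt (d x)) / n x
  let r : E → E := fun x => x + l x • u x
  let U : Set E := {x | n x ≠ 0} ∩ {x | 0 < d x}
  have hUo : IsOpen U := (isOpen_ne_fun hns.continuous continuous_const).inter
    (isOpen_lt continuous_const hds.continuous)
  have hBU : closedBall (0:E) 1 ⊆ U := by
    intro x hx
    have hx1 : ‖x‖ ≤ 1 := by simpa using hx
    have hu0 : 0 < ‖u x‖ := norm_pos_iff.2 (sub_ne_zero.2 (hQx x hx1).symm)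
    have hn0 : 0 < n x := by simp only [n]; positivity
    refine ⟨hn0.ne', ?_⟩
    simp only [mem_ofPred_eq, d]
    rcases hx1.lt_or_eq with h | h
    · have : 0 < 1 - ‖x‖^2 := by nlinarith [norm_nonneg x]
      positivity
    · have : 0 < a x := by
        simp only [a, u, inner_sub_right, real_inner_self_eq_norm_sq, h]
        have := real_inner_le_norm x (Q x)
        rw [h] at this
        linarith [hQ1 x]
      rw [h]
      have : 0 < a x ^ 2 := by positivity
      linarith
  have hrU : ∀ x ∈ U, ‖r x‖ = 1 := by
    rintro x ⟨hn, hd⟩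
    have hn : n x ≠ 0 := hn
    have hd : 0 < d x := hd
    have hsq := Real.sq_sqrt hd.le
    have h1 : ‖r x‖^2 = 1 := by
      simp only [r]
      rw [norm_add_sq_real, inner_smul_right, norm_smul, mul_pow, Real.norm_eq_abs, sq_abs]
      change ‖x‖^2 + 2 * (l x * a x) + l x ^ 2 * n x = 1
      have hl : l x * n x = -a x + Real.sqrt (d x) := by
        simp only [l]; rw [div_mul_cancel₀ _ hn]
      have h2 : n x * (‖x‖^2 + 2 * (l x * a x) + l x ^ 2 * n x) = n x * 1 := by
        have e1 : n x * (‖x‖^2 + 2 * (l x * a x) + l x ^ 2 * n x) =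
          n x * ‖x‖^2 + 2 * (l x * n x) * a x + (l x * n x)^2 := by ring
        rw [e1, hl]
        have : d x = a x ^ 2 + n x * (1 - ‖x‖^2) := rfl
        nlinarith
      exact mul_left_cancel₀ hn h2
    have := norm_nonneg (r x)
    nlinarith
  refine aux_no_retraction r ?_ (fun x hx => hrU x (hBU hx)) ?_ U hUo hBU hrU
  · intro x hx
    obtain ⟨hn, hd⟩ := hBU hx
    exact contDiffAt_id.add ((((has.contDiffAt.neg).add (hds.contDiffAt.sqrt (ne_of_gt hd))).div
      hns.contDiffAt hn).smul hus.contDiffAt)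
  · intro x hx
    have ha : 0 ≤ a x := by
      simp only [a, u, inner_sub_right, real_inner_self_eq_norm_sq, hx]
      have := real_inner_le_norm x (Q x)
      rw [hx] at this
      linarith [hQ1 x]
    have : l x = 0 := by
      simp only [l, d, hx]
      simp [Real.sqrt_sq ha]
    simp [r, this]

theorem aux_brouwer_inner {E : Type*} [NormedAddCommGroup E] [InnerProductSpace ℝ E]
    [FiniteDimensional ℝ E] (K : Set E) (hK : IsCompact K) (hKc : Convex ℝ K) (hne : K.Nonempty)
    (F : E → E) (hF : ContinuousOn F K) (hFK : MapsTo F K K) : ∃ x ∈ K, F x = x := by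
  obtain ⟨π, hπ1, hπ2, hπL, -⟩ := aux_proj K hne hK.isClosed hKc
  obtain ⟨R0, hR0⟩ := hK.isBounded.exists_norm_le
  set R := max R0 1
  have hR : 0 < R := lt_of_lt_of_le one_pos (le_max_right _ _)
  have hcont : Continuous (fun x => F (π (R • x))) :=
    hF.comp_continuous (hπL.continuous.comp (continuous_const_smul R)) (fun x => hπ1 _)
  obtain ⟨x, hx⟩ := aux_brouwer_ball (fun x => R⁻¹ • F (π (R • x))) (hcont.const_smul _) (by
    intro x
    rw [norm_smul, Real.norm_of_nonneg (by positivity), inv_mul_le_iff₀ hR, mul_one]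
    exact (hR0 _ (hFK (hπ1 _))).trans (le_max_left _ _))
  have h1 : F (π (R • x)) = R • x := by
    conv_rhs => rw [← hx]
    rw [smul_smul, mul_inv_cancel₀ hR.ne', one_smul]
  have h2 : R • x ∈ K := h1 ▸ hFK (hπ1 _)
  exact ⟨R • x, h2, by rwa [hπ2 _ h2] at h1⟩

/-- Brouwer's fixed point theorem. -/
theorem aux_brouwer {V : Type*} [NormedAddCommGroup V] [NormedSpace ℝ V] [FiniteDimensional ℝ V]
    (K : Set V) (hK : IsCompact K) (hKc : Convex ℝ K) (hne : K.Nonempty)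
    (F : V → V) (hF : ContinuousOn F K) (hFK : MapsTo F K K) : ∃ x ∈ K, F x = x := by
  let T := toEuclidean (E := V)
  have hm : MapsTo T.symm (T '' K) K := by
    rintro _ ⟨x, hx, rfl⟩; simpa using hx
  obtain ⟨y, hy, hfy⟩ := aux_brouwer_inner (T '' K) (hK.image T.continuous)
    (hKc.linear_image T.toLinearEquiv.toLinearMap) (hne.image _) (fun y => T (F (T.symm y)))
    (T.continuous.comp_continuousOn (hF.comp T.symm.continuous.continuousOn hm))
    (fun y hy => mem_image_of_mem _ (hFK (hm hy)))
  exact ⟨T.symm y, hm hy, by apply T.injective; simpa using hfy⟩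

theorem aux_cone_normal {V : Type*} [NormedAddCommGroup V] [NormedSpace ℝ V]
    [FiniteDimensional ℝ V] (C : Set V)
    (hCscal : ∀ (c : ℝ), 0 ≤ c → ∀ x ∈ C, c • x ∈ C)
    (hCpointed : C ∩ (-C) = {0}) (hCclosed : IsClosed C) :
    ∃ M : ℝ, 0 < M ∧ ∀ a b : V, a ∈ C → b - a ∈ C → ‖a‖ ≤ M * ‖b‖ := by
  have : ProperSpace V := FiniteDimensional.proper ℝ V
  have hc : IsCompact (sphere (0:V) 1 ∩ -C) := (isCompact_sphere 0 1).inter_right hCclosed.neg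
  have hd : Disjoint (sphere (0:V) 1 ∩ -C) C := by
    rw [Set.disjoint_left]
    rintro a ⟨ha1, ha2⟩ ha3
    have : a ∈ C ∩ -C := ⟨ha3, ha2⟩
    rw [hCpointed] at this
    rw [mem_singleton_iff.1 this] at ha1
    simp at ha1
  obtain ⟨δ, hδ, h⟩ := hd.exists_thickenings hc hCclosed
  refine ⟨δ⁻¹, by positivity, fun a b ha hb => ?_⟩
  by_cases ha0 : a = 0
  · subst ha0; simp; positivity
  have hn : 0 < ‖a‖ := norm_pos_iff.2 ha0
  rw [le_inv_mul_iff₀ hδ]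
  by_contra hlt
  push Not at hlt
  have h1 : -(‖a‖⁻¹ • a) ∈ sphere (0:V) 1 ∩ -C := by
    refine ⟨?_, ?_⟩
    · simp [norm_smul, hn.ne']
    · simpa using hCscal _ (by positivity) a ha
  have h2 : ‖a‖⁻¹ • (b - a) ∈ C := hCscal _ (by positivity) _ hb
  have h3 : dist (‖a‖⁻¹ • (b - a)) (-(‖a‖⁻¹ • a)) < δ := by
    rw [dist_eq_norm, sub_neg_eq_add, ← smul_add, sub_add_cancel, norm_smul, norm_inv, norm_norm,
      inv_mul_lt_iff₀ hn]
    linarith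
  exact Set.disjoint_left.1 h (mem_thickening_iff.2 ⟨_, h1, h3⟩) (self_subset_thickening hδ _ h2)

theorem aux_approx {V : Type*} [NormedAddCommGroup V] [NormedSpace ℝ V]
    (Ω : Set V) (hΩ : IsOpen Ω) (S : Set Ω) (hS : Dense S) (D : Set V) (hD : IsOpen D) (e : V)
    (he : ∀ t : ℝ, 0 < t → t • e ∈ D) (y : Ω) (ε : ℝ) (hε : 0 < ε) :
    ∃ q ∈ S, dist (q : V) y < ε ∧ (q : V) - y ∈ D := by
  have ht : Tendsto (fun t : ℝ => (y : V) + t • e) (𝓝[>] 0) (𝓝 y) := by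
    have : ContinuousAt (fun t : ℝ => (y : V) + t • e) 0 := by fun_prop
    have h2 := this.tendsto
    simp only [zero_smul, add_zero] at h2
    exact h2.mono_left nhdsWithin_le_nhds
  have hev := ht.eventually ((isOpen_ball.inter hΩ).mem_nhds ⟨mem_ball_self hε, y.2⟩)
  obtain ⟨t, ⟨h1, h2⟩, h3⟩ := (hev.and self_mem_nhdsWithin).exists
  obtain ⟨q, hq, hqS⟩ := hS.inter_open_nonempty
    ({q : Ω | dist (q : V) y < ε} ∩ {q : Ω | (q : V) - y ∈ D})
    ((isOpen_lt (by fun_prop) continuous_const).inter (hD.preimage (by fun_prop)))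
    ⟨⟨_, h2⟩, h1, by simpa using he t h3⟩
  exact ⟨q, hqS, hq.1, hq.2⟩

theorem aux_iter_mono {V : Type*} [NormedAddCommGroup V] (C : Set V) (Ω : Set V) (f : Ω → Ω)
    (hmono : ∀ x y : Ω, ((y : V) - (x : V)) ∈ C → ((f y : V) - (f x : V)) ∈ C) (p : ℕ) :
    ∀ x y : Ω, ((y : V) - (x : V)) ∈ C → ((f^[p] y : V) - (f^[p] x : V)) ∈ C := by
  induction p with
  | zero => intro x y h; simpa using h
  | succ k ih => intro x y h; rw [Function.iterate_succ_apply, Function.iterate_succ_apply]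
                 exact ih _ _ (hmono _ _ h)

theorem aux_fixed {V : Type*} [NormedAddCommGroup V] (C : Set V)
    (h0 : (0:V) ∈ C) (hadd : ∀ a ∈ C, ∀ b ∈ C, a + b ∈ C)
    (hCpointed : C ∩ (-C) = {0}) (hCclosed : IsClosed C) (Ω : Set V) (f : Ω → Ω)
    (hmono : ∀ x y : Ω, ((y : V) - (x : V)) ∈ C → ((f y : V) - (f x : V)) ∈ C)
    (happ : ∀ (y : Ω) (ε : ℝ), 0 < ε → ∃ q ∈ {x : Ω | ∃ p : ℕ, 1 ≤ p ∧ f^[p] x = x},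
      dist (q : V) y < ε ∧ (q : V) - y ∈ C) (p : ℕ) (u : Ω) (hu : (f^[p] u : V) - u ∈ C) :
    f^[p] u = u := by
  have hinc : ∀ k : ℕ, ((f^[p*(k+1)] u : Ω) : V) - f^[p] u ∈ C := by
    intro k
    induction k with
    | zero => simpa using h0
    | succ k ih =>
      have h1 := aux_iter_mono C Ω f hmono (p*(k+1)) _ _ hu
      rw [← Function.iterate_add_apply] at h1
      have h2 := hadd _ h1 _ ih
      rw [sub_add_sub_cancel] at h2
      exact h2
  have hmem : (u : V) - f^[p] u ∈ C := by
    rw [← hCclosed.closure_eq, Metric.mem_closure_iff]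
    intro ε hε
    obtain ⟨q, ⟨k, hk, hq⟩, hd, hqu⟩ := happ u ε hε
    refine ⟨(q : V) - f^[p] u, ?_, by simpa [dist_comm] using hd⟩
    obtain ⟨j, rfl⟩ : ∃ j, k = j + 1 := ⟨k - 1, by omega⟩
    have h1 := aux_iter_mono C Ω f hmono (p*(j+1)) _ _ hqu
    have h2 : f^[p*(j+1)] q = q := by
      rw [mul_comm, Function.iterate_mul]
      exact Function.iterate_fixed hq p
    rw [h2] at h1
    have h3 := hadd _ h1 _ (hinc j)
    rwa [sub_add_sub_cancel] at h3
  have : (f^[p] u : V) - u ∈ C ∩ -C := ⟨hu, by simpa using hmem⟩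
  rw [hCpointed, mem_singleton_iff, sub_eq_zero] at this
  exact Subtype.ext this

theorem aux_main {V : Type*} [NormedAddCommGroup V] [NormedSpace ℝ V] [FiniteDimensional ℝ V]
    (C : Set V) (hCconv : Convex ℝ C)
    (hCscal : ∀ (c : ℝ), 0 ≤ c → ∀ x ∈ C, c • x ∈ C)
    (hadd : ∀ a ∈ C, ∀ b ∈ C, a + b ∈ C)
    (hCpointed : C ∩ (-C) = {0}) (hCclosed : IsClosed C) (hCsolid : (interior C).Nonempty)
    (hsm : ∀ (c : ℝ), 0 < c → ∀ x ∈ interior C, c • x ∈ interior C)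
    (Ω : Set V) (hΩopen : IsOpen Ω) (f : Ω → Ω) (hf : Continuous f)
    (hmono : ∀ x y : Ω, ((y : V) - (x : V)) ∈ C → ((f y : V) - (f x : V)) ∈ C)
    (hdense : Dense {x : Ω | ∃ p : ℕ, 1 ≤ p ∧ f^[p] x = x})
    (y : V) (hy : y ∈ Ω) (A : Set V)
    (hA1 : ∀ z, y - z ∈ interior C → z ∉ closure A)
    (hA2 : ∀ w, w - y ∈ interior C → w ∈ interior A) :
    y ∈ closure ({w : V | ∃ hw : w ∈ Ω, ∃ p : ℕ, 1 ≤ p ∧ f^[p] ⟨w, hw⟩ = ⟨w, hw⟩} ∩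
      (frontier A ∩ Ω)) := by
  have : ProperSpace V := FiniteDimensional.proper ℝ V
  obtain ⟨e, he⟩ := hCsolid
  have h0 : (0:V) ∈ C := by simpa using hCscal 0 le_rfl e (interior_subset he)
  have happ1 := fun (y : Ω) ε hε => aux_approx Ω hΩopen _ hdense (interior C) isOpen_interior e
    (fun t ht => hsm t ht e he) y ε hε
  have happ2 := fun (y : Ω) ε hε => aux_approx Ω hΩopen _ hdense (-interior C)
    isOpen_interior.neg (-e) (fun t ht => by simpa using hsm t ht e he) y ε hε
  have hfix1 := aux_fixed C h0 hadd hCpointed hCclosed Ω f hmono (fun y ε hε => by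
    obtain ⟨q, h1, h2, h3⟩ := happ1 y ε hε
    exact ⟨q, h1, h2, interior_subset h3⟩)
  have hfix2 := aux_fixed (-C) (by simpa using h0)
    (fun a ha b hb => by
      have := hadd _ ha _ hb
      simpa [add_comm] using this)
    (by rw [neg_neg, inter_comm]; exact hCpointed) hCclosed.neg Ω f
    (fun a b hab => by
      have := hmono b a (by simpa using hab)
      simpa using this) (fun y ε hε => by
    obtain ⟨q, h1, h2, h3⟩ := happ2 y ε hε
    exact ⟨q, h1, h2, interior_subset (s := C) h3⟩)
  obtain ⟨M, hM, hnormal⟩ := aux_cone_normal C hCscal hCpointed hCclosed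
  rw [Metric.mem_closure_iff]
  intro ε0 hε0
  obtain ⟨ε1, hε1, hball⟩ := Metric.isOpen_iff.1 hΩopen y hy
  set ε := min ε0 ε1
  have hε : 0 < ε := lt_min hε0 hε1
  set η := ε / (1 + 2 * M) with hη
  have hηpos : 0 < η := by positivity
  obtain ⟨z, ⟨pz, hpz, hz⟩, hzd, hzC⟩ := happ2 ⟨y, hy⟩ η hηpos
  obtain ⟨w, ⟨pw, hpw, hw⟩, hwd, hwC⟩ := happ1 ⟨y, hy⟩ η hηpos
  simp only at hzd hzC hwd hwC
  replace hzC : y - z ∈ interior C := by simpa using hzC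
  have hzA := hA1 z hzC
  have hwA := hA2 w hwC
  let K : Set V := {v | v - z ∈ C} ∩ {v | (w : V) - v ∈ C}
  have hKcl : IsClosed K := (hCclosed.preimage (by fun_prop)).inter (hCclosed.preimage (by fun_prop))
  have hKball : K ⊆ ball y ε := by
    rintro v ⟨hv1, hv2⟩
    have h1 := hnormal (v - z) (w - z) hv1 (by simpa using hv2)
    have h2 : ‖(w : V) - z‖ ≤ 2 * η := by
      rw [← dist_eq_norm]
      have := dist_triangle_right (w : V) z y
      linarith
    have h3 : dist v y ≤ dist v z + dist (z : V) y := dist_triangle _ _ _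
    rw [dist_eq_norm v] at h3
    have h4 : M * ‖(w : V) - z‖ ≤ M * (2 * η) := by gcongr
    have h5 : η * (1 + 2 * M) = ε := by rw [hη]; field_simp
    rw [mem_ball]
    rw [← dist_eq_norm] at h3
    rw [← dist_eq_norm] at h1
    nlinarith
  have hKΩ : K ⊆ Ω := fun v hv => hball (ball_subset_ball (min_le_right _ _) (hKball hv))
  have hKcomp : IsCompact K := Metric.isCompact_of_isClosed_isBounded hKcl
    (isBounded_ball.subset hKball)
  have hKconv : Convex ℝ K := by
    rintro a ⟨ha1, ha2⟩ b ⟨hb1, hb2⟩ s t hs ht hst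
    refine ⟨?_, ?_⟩
    · have := hCconv ha1 hb1 hs ht hst
      have e1 : s • (a - (z : V)) + t • (b - z) = s • a + t • b - (s + t) • z := by
        simp only [smul_sub, add_smul]; abel
      rw [e1, hst, one_smul] at this
      exact this
    · have := hCconv ha2 hb2 hs ht hst
      have e1 : s • ((w : V) - a) + t • ((w : V) - b) = (s + t) • w - (s • a + t • b) := by
        simp only [smul_sub, add_smul]; abel
      rw [e1, hst, one_smul] at this
      exact this
  have hzw : (w : V) - z ∈ C := by
    have := hadd _ (interior_subset hwC) _ (interior_subset hzC)
    rwa [sub_add_sub_cancel] at this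
  have hzK : (z : V) ∈ K := ⟨by simpa using h0, hzw⟩
  have hwK : (w : V) ∈ K := ⟨hzw, by simpa using h0⟩
  set p := pz * pw with hp
  have hp1 : 1 ≤ p := Nat.mul_pos hpz hpw
  have hgz : f^[p] z = z := by
    rw [hp, Function.iterate_mul]; exact Function.iterate_fixed hz pw
  have hgw : f^[p] w = w := by
    rw [hp, mul_comm, Function.iterate_mul]; exact Function.iterate_fixed hw pz
  classical
  let G : V → V := fun v => if h : v ∈ Ω then (f^[p] ⟨v, h⟩ : V) else v
  have hG : ∀ v : Ω, G v = f^[p] v := fun v => by simp [G]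
  have hGc : ContinuousOn G Ω := by
    rw [continuousOn_iff_continuous_domRestrict]
    have : Ω.domRestrict G = fun v => (f^[p] v : V) := funext hG
    rw [this]
    exact continuous_subtype_val.comp (hf.iterate p)
  have hGK : MapsTo G K K := by
    intro v hv
    have e1 := hG ⟨v, hKΩ hv⟩
    simp only at e1
    rw [e1]
    refine ⟨?_, ?_⟩
    · have := aux_iter_mono C Ω f hmono p z ⟨v, hKΩ hv⟩ hv.1
      rwa [hgz] at this
    · have := aux_iter_mono C Ω f hmono p ⟨v, hKΩ hv⟩ w hv.2
      rwa [hgw] at this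
  have hAne : A.Nonempty := ⟨w, interior_subset hwA⟩
  have hAcne : Aᶜ.Nonempty := ⟨z, fun h => hzA (subset_closure h)⟩
  let τ : V → ℝ := fun v => infDist v Aᶜ - infDist v A
  have hτc : Continuous τ := (continuous_infDist_pt _).sub (continuous_infDist_pt _)
  have hτw : 0 < τ w := by
    have h1 : infDist (w : V) A = 0 := infDist_zero_of_mem (interior_subset hwA)
    have h2 : 0 < infDist (w : V) Aᶜ := by
      refine lt_of_le_of_ne infDist_nonneg fun h => ?_
      have := (mem_closure_iff_infDist_zero hAcne).2 h.symm
      rw [closure_compl] at this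
      exact this hwA
    simp only [τ]; linarith
  have hτz : τ z < 0 := by
    have h1 : infDist (z : V) Aᶜ = 0 := infDist_zero_of_mem (fun h => hzA (subset_closure h))
    have h2 : 0 < infDist (z : V) A := by
      refine lt_of_le_of_ne infDist_nonneg fun h => ?_
      exact hzA ((mem_closure_iff_infDist_zero hAne).2 h.symm)
    simp only [τ]; linarith
  let α : V → ℝ := fun v => min 1 (max 0 (-τ v))
  let β : V → ℝ := fun v => min 1 (max 0 (τ v))
  let F : V → V := fun v => G v + α v • (w - G v) + β v • (z - G v)
  have hGcK := hGc.mono hKΩ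
  have hFc : ContinuousOn F K := by
    have hα : ContinuousOn α K := by fun_prop
    have hβ : ContinuousOn β K := by fun_prop
    exact (hGcK.add (hα.smul (continuousOn_const.sub hGcK))).add
      (hβ.smul (continuousOn_const.sub hGcK))
  have hα0 : ∀ v, 0 ≤ τ v → α v = 0 := fun v hv => by
    simp only [α]; rw [max_eq_left (by linarith)]; simp
  have hβ0 : ∀ v, τ v ≤ 0 → β v = 0 := fun v hv => by
    simp only [β]; rw [max_eq_left hv]; simp
  have hα1 : ∀ v, 0 ≤ α v ∧ α v ≤ 1 := fun v => ⟨by simp [α], min_le_left _ _⟩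
  have hβ1 : ∀ v, 0 ≤ β v ∧ β v ≤ 1 := fun v => ⟨by simp [β], min_le_left _ _⟩
  have hFK : MapsTo F K K := by
    intro v hv
    rcases le_total (τ v) 0 with h | h
    · have : F v = G v + α v • (w - G v) := by simp [F, hβ0 v h]
      rw [this]
      exact hKconv.add_smul_sub_mem (hGK hv) hwK (hα1 v)
    · have : F v = G v + β v • (z - G v) := by simp [F, hα0 v h]
      rw [this]
      exact hKconv.add_smul_sub_mem (hGK hv) hzK (hβ1 v)
  obtain ⟨u, huK, hu⟩ := aux_brouwer K hKcomp hKconv ⟨_, hzK⟩ F hFc hFK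
  have huΩ := hKΩ huK
  have hGu := hG ⟨u, huΩ⟩
  simp only at hGu
  have key : f^[p] ⟨u, huΩ⟩ = ⟨u, huΩ⟩ ∧ τ u = 0 := by
    rcases le_total (τ u) 0 with h | h
    · have e1 : G u + α u • (w - G u) = u := by
        simpa [F, hβ0 u h] using hu
      have e2 : u - G u = α u • (w - G u) := by rw [sub_eq_iff_eq_add, add_comm]; exact e1.symm
      have e3 : f^[p] ⟨u, huΩ⟩ = ⟨u, huΩ⟩ := by
        apply hfix2 p ⟨u, huΩ⟩
        rw [← hGu]
        have : u - G u ∈ C := e2 ▸ hCscal _ (hα1 u).1 _ (hGK huK).2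
        simpa using this
      refine ⟨e3, ?_⟩
      rw [e3] at hGu
      simp only at hGu
      rw [hGu, sub_self] at e2
      rcases smul_eq_zero.1 e2.symm with h5 | h5
      · by_contra hne
        have hlt : τ u < 0 := lt_of_le_of_ne h hne
        have : 0 < α u := lt_min one_pos (lt_max_of_lt_right (by linarith))
        linarith
      · rw [sub_eq_zero] at h5
        rw [← h5] at h
        linarith
    · have e1 : G u + β u • (z - G u) = u := by
        simpa [F, hα0 u h] using hu
      have e2 : u - G u = β u • (z - G u) := by rw [sub_eq_iff_eq_add, add_comm]; exact e1.symm
      have e3 : f^[p] ⟨u, huΩ⟩ = ⟨u, huΩ⟩ := by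
        apply hfix1 p ⟨u, huΩ⟩
        rw [← hGu]
        have : G u - u = β u • (G u - z) := by
          rw [← neg_sub, e2, ← smul_neg, neg_sub]
        rw [this]
        exact hCscal _ (hβ1 u).1 _ (hGK huK).1
      refine ⟨e3, ?_⟩
      rw [e3] at hGu
      simp only at hGu
      rw [hGu, sub_self] at e2
      rcases smul_eq_zero.1 e2.symm with h5 | h5
      · by_contra hne
        have hlt : 0 < τ u := lt_of_le_of_ne h (Ne.symm hne)
        have : 0 < β u := lt_min one_pos (lt_max_of_lt_right (by linarith))
        linarith
      · rw [sub_eq_zero] at h5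
        rw [← h5] at h
        linarith
  obtain ⟨hfu, hτu⟩ := key
  refine ⟨u, ⟨⟨huΩ, p, hp1, hfu⟩, ?_, huΩ⟩, ?_⟩
  · simp only [τ] at hτu
    rw [frontier_eq_closure_inter_closure]
    by_cases hmem : u ∈ A
    · refine ⟨subset_closure hmem, (mem_closure_iff_infDist_zero hAcne).2 ?_⟩
      rw [infDist_zero_of_mem hmem] at hτu
      linarith
    · refine ⟨(mem_closure_iff_infDist_zero hAne).2 ?_, subset_closure hmem⟩
      rw [infDist_zero_of_mem (show u ∈ Aᶜ from hmem)] at hτu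
      linarith
  · rw [dist_comm]
    exact lt_of_lt_of_le (hKball huK) (min_le_left _ _)

/-- If a monotone homeomorphism of an open set has dense periodic points, then
the periodic points are dense in `(x + ∂C) ∩ Ω` and in `(x - ∂C) ∩ Ω` for every
`x ∈ Ω`. -/
theorem periodic_points_dense_in_boundary_sections
    {V : Type*} [NormedAddCommGroup V] [NormedSpace ℝ V] [FiniteDimensional ℝ V]
    (C : Set V)
    (hCconv : Convex ℝ C)
    (hCscal : ∀ (c : ℝ), 0 ≤ c → ∀ x ∈ C, c • x ∈ C)
    (hCpointed : C ∩ (-C) = {0})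
    (hCclosed : IsClosed C)
    (hCsolid : (interior C).Nonempty)
    (Ω : Set V) (hΩopen : IsOpen Ω)
    (f : Ω ≃ₜ Ω)
    (hmono : ∀ x y : Ω, ((y : V) - (x : V)) ∈ C → ((f y : V) - (f x : V)) ∈ C)
    (hdense : Dense {x : Ω | ∃ p : ℕ, 1 ≤ p ∧ (⇑f)^[p] x = x})
    (x : V) (hx : x ∈ Ω) :
    (((fun v => x + v) '' frontier C) ∩ Ω ⊆
      closure ({w : V | ∃ hw : w ∈ Ω, ∃ p : ℕ, 1 ≤ p ∧ (⇑f)^[p] ⟨w, hw⟩ = ⟨w, hw⟩} ∩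
        (((fun v => x + v) '' frontier C) ∩ Ω))) ∧
    (((fun v => x - v) '' frontier C) ∩ Ω ⊆
      closure ({w : V | ∃ hw : w ∈ Ω, ∃ p : ℕ, 1 ≤ p ∧ (⇑f)^[p] ⟨w, hw⟩ = ⟨w, hw⟩} ∩
        (((fun v => x - v) '' frontier C) ∩ Ω))) := by
  have hadd : ∀ a ∈ C, ∀ b ∈ C, a + b ∈ C := by
    intro a ha b hb
    have h1 := hCconv ha hb (by norm_num : (0:ℝ) ≤ 1/2) (by norm_num : (0:ℝ) ≤ 1/2) (by norm_num)
    have h2 := hCscal 2 (by norm_num) _ h1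
    rw [← smul_add, smul_smul] at h2
    norm_num at h2
    exact h2
  have hiadd : ∀ a ∈ interior C, ∀ b ∈ C, a + b ∈ interior C := by
    intro a ha b hb
    have h1 : (fun v => v + b) '' interior C ⊆ interior C := by
      refine interior_maximal ?_ ((Homeomorph.addRight b).isOpenMap _ isOpen_interior)
      rintro _ ⟨v, hv, rfl⟩
      exact hadd _ (interior_subset hv) _ hb
    exact h1 ⟨a, ha, rfl⟩
  have hsm : ∀ (c : ℝ), 0 < c → ∀ x ∈ interior C, c • x ∈ interior C := by
    intro c hc a ha
    have h1 : (fun v => c • v) '' interior C ⊆ interior C := by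
      refine interior_maximal ?_ ((Homeomorph.smulOfNeZero c hc.ne').isOpenMap _ isOpen_interior)
      rintro _ ⟨v, hv, rfl⟩
      exact hCscal c hc.le _ (interior_subset hv)
    exact h1 ⟨a, ha, rfl⟩
  constructor
  · have hfr : (fun v => x + v) '' frontier C = frontier ((fun v => x + v) '' C) :=
      (Homeomorph.addLeft x).image_frontier C
    have hin : (fun v => x + v) '' interior C = interior ((fun v => x + v) '' C) :=
      (Homeomorph.addLeft x).image_interior C
    have hcl : IsClosed ((fun v => x + v) '' C) := (Homeomorph.addLeft x).isClosedMap _ hCclosed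
    rintro y ⟨⟨v, hv, rfl⟩, hyΩ⟩
    rw [hfr]
    have hvC : v ∈ C := hCclosed.frontier_subset hv
    have hvi : v ∉ interior C := hv.2
    refine aux_main C hCconv hCscal hadd hCpointed hCclosed hCsolid hsm Ω hΩopen f f.continuous
      hmono hdense _ hyΩ _ ?_ ?_
    · intro z hz hzA
      rw [hcl.closure_eq] at hzA
      obtain ⟨c, hc, rfl⟩ := hzA
      have := hiadd _ hz _ hc
      apply hvi
      simpa using this
    · intro w hw
      rw [← hin]
      exact ⟨w - x, by simpa [sub_add_eq_sub_sub] using hiadd _ hw _ hvC, by simp⟩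
  · have hfr : (fun v => x - v) '' frontier C = frontier ((fun v => x - v) '' C)ᶜ := by
      rw [frontier_compl]
      exact (Homeomorph.subLeft x).image_frontier C
    have hin : (fun v => x - v) '' interior C = interior ((fun v => x - v) '' C) :=
      (Homeomorph.subLeft x).image_interior C
    have hcl : IsClosed ((fun v => x - v) '' C) := (Homeomorph.subLeft x).isClosedMap _ hCclosed
    rintro y ⟨⟨v, hv, rfl⟩, hyΩ⟩
    rw [hfr]
    have hvC : v ∈ C := hCclosed.frontier_subset hv
    have hvi : v ∉ interior C := hv.2
    refine aux_main C hCconv hCscal hadd hCpointed hCclosed hCsolid hsm Ω hΩopen f f.continuous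
      hmono hdense _ hyΩ _ ?_ ?_
    · intro z hz hzA
      rw [closure_compl, ← hin] at hzA
      apply hzA
      refine ⟨x - z, ?_, by simp⟩
      have := hiadd _ hz _ hvC
      have e : x - v - z + v = x - z := by abel
      rwa [e] at this
    · intro w hw
      rw [hcl.isOpen_compl.interior_eq]
      rintro ⟨c, hc, rfl⟩
      have := hiadd _ hw _ hc
      apply hvi
      simpa using this
end

section
/- Let V be a finite-dimensional real normed vector space, C ⊆ V a solid closed cone, Ω ⊆ V an open set, and f : Ω → Ω a homeomorphism that is monotone with respect to C such that Per(f) is dense in Ω. Let r ≥ 1 be an integer, g = f^r, and let y, z ∈ Ω be fixed points of g with y ≪_C z and [y, z]_C ⊆ Ω. Then there exists a set M ⊆ Ω of fixed points of g that is totally ordered by ≤_C, is a connected subset of V, and satisfies y ∈ M, z ∈ M, y ≤_C m ≤_C z for all m ∈ M. -/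
open MeasureTheory Set Filter Topology

theorem det_one_add_smul_poly {E : Type*} [NormedAddCommGroup E] [NormedSpace ℝ E]
    [FiniteDimensional ℝ E] (A : E →L[ℝ] E) :
    ∃ P : Polynomial ℝ, P.natDegree ≤ Module.finrank ℝ E ∧
      ∀ t : ℝ, P.eval t = (1 + t • A).det := by
  classical
  let b := Module.finBasis ℝ E
  let m := LinearMap.toMatrix b b (A : E →ₗ[ℝ] E)
  refine ⟨Matrix.det ((Polynomial.X : Polynomial ℝ) • m.map Polynomial.C
    + (1 : Matrix _ _ ℝ).map Polynomial.C), ?_, ?_⟩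
  · simpa using Polynomial.natDegree_det_X_add_C_le m 1
  · intro t
    have h1 : (1 + t • A).det = (LinearMap.toMatrix b b ((1 + t • A : E →L[ℝ] E) : E →ₗ[ℝ] E)).det := by
      rw [LinearMap.det_toMatrix]
    rw [h1]
    have h2 : LinearMap.toMatrix b b ((1 + t • A : E →L[ℝ] E) : E →ₗ[ℝ] E) = t • m + 1 := by
      have : ((1 + t • A : E →L[ℝ] E) : E →ₗ[ℝ] E) = LinearMap.id + t • (A : E →ₗ[ℝ] E) := by
        ext; simp
      rw [this, map_add, map_smul, LinearMap.toMatrix_id, add_comm]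
    rw [h2, ← Polynomial.coe_evalRingHom, RingHom.map_det]
    congr 1
    ext i j
    by_cases hij : i = j
    · subst hij; simp; ring
    · simp [Matrix.one_apply_ne hij]; ring

theorem no_retraction {E : Type*} [NormedAddCommGroup E] [InnerProductSpace ℝ E]
    [FiniteDimensional ℝ E] (r : E → E) (U : Set E) (hU : IsOpen U)
    (hBU : Metric.closedBall (0 : E) 1 ⊆ U) (hr : ContDiffOn ℝ 1 r U)
    (hr1 : ∀ x ∈ U, ‖r x‖ = 1) (hr2 : ∀ x, ‖x‖ = 1 → r x = x) : False := by
  classical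
  let _ : MeasurableSpace E := borel E
  have : BorelSpace E := ⟨rfl⟩
  set B := Metric.closedBall (0 : E) 1 with hB
  have hBc : IsCompact B := isCompact_closedBall 0 1
  let h : E → E := fun x => r x - x
  let D : E → E →L[ℝ] E := fun x => fderiv ℝ r x - 1
  have hrd : ∀ x ∈ B, HasFDerivAt r (fderiv ℝ r x) x := fun x hx =>
    ((hr.differentiableOn (by norm_num)).differentiableAt (hU.mem_nhds (hBU hx))).hasFDerivAt
  have hhd : ∀ x ∈ B, HasFDerivAt h (D x) x := fun x hx => (hrd x hx).sub (hasFDerivAt_id x)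
  have hDc : ContinuousOn D B :=
    ((hr.continuousOn_fderiv_of_isOpen hU le_rfl).mono hBU).sub continuousOn_const
  obtain ⟨L0, hL0⟩ := hBc.exists_bound_of_continuousOn hDc
  obtain ⟨L, hLpos, hL⟩ : ∃ L : ℝ, 0 < L ∧ ∀ x ∈ B, ‖D x‖ ≤ L :=
    ⟨max L0 1, by positivity, fun x hx => (hL0 x hx).trans (le_max_left _ _)⟩
  have hLip : ∀ x ∈ B, ∀ y ∈ B, ‖h y - h x‖ ≤ L * ‖y - x‖ := fun x hx y hy =>
    Convex.norm_image_sub_le_of_norm_hasFDerivWithin_le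
      (fun x hx => (hhd x hx).hasFDerivWithinAt) hL (convex_closedBall 0 1) hx hy
  -- extension by zero
  let k : E → E := fun x => if x ∈ B then h x else 0
  have hkB : ∀ x ∈ B, k x = h x := fun x hx => if_pos hx
  have hkn : ∀ x, x ∉ B → k x = 0 := fun x hx => if_neg hx
  have hmix : ∀ x ∈ B, ∀ y, y ∉ B → ‖h x‖ ≤ L * ‖y - x‖ := by
    intro x hx y hy
    have hx1 : ‖x‖ ≤ 1 := by simpa [hB] using hx
    have hy1 : 1 ≤ ‖y‖ := by
      have : ¬ ‖y‖ ≤ 1 := by simpa [hB] using hy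
      linarith
    have hc : ContinuousOn (fun t : ℝ => ‖x + t • (y - x)‖) (Icc 0 1) := by fun_prop
    have hiv := intermediate_value_Icc (zero_le_one' ℝ) hc
    obtain ⟨t, ht, ht1⟩ := hiv (show (1 : ℝ) ∈ _ by simpa using ⟨hx1, hy1⟩)
    simp only at ht1
    have hz := hLip x hx (x + t • (y - x)) (by simp [hB, ht1])
    have hz0 : h (x + t • (y - x)) = 0 := by
      simp only [h]; rw [hr2 _ ht1, sub_self]
    rw [hz0, zero_sub, norm_neg, add_sub_cancel_left, norm_smul, Real.norm_of_nonneg ht.1] at hz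
    have : t * ‖y - x‖ ≤ ‖y - x‖ := mul_le_of_le_one_left (norm_nonneg _) ht.2
    nlinarith
  have hkLip : ∀ x y, ‖k y - k x‖ ≤ L * ‖y - x‖ := by
    intro x y
    by_cases hx : x ∈ B <;> by_cases hy : y ∈ B
    · rw [hkB x hx, hkB y hy]; exact hLip x hx y hy
    · rw [hkB x hx, hkn y hy, zero_sub, norm_neg]; exact hmix x hx y hy
    · rw [hkn x hx, hkB y hy, sub_zero, norm_sub_rev y x]; exact hmix y hy x hx
    · rw [hkn x hx, hkn y hy]; simp; positivity
  -- positivity of det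
  obtain ⟨d, hd, hdet⟩ : ∃ d > 0, ∀ A : E →L[ℝ] E, ‖A‖ < d → 0 < (1 + A).det := by
    have hcont : Continuous fun A : E →L[ℝ] E => (1 + A).det :=
      ContinuousLinearMap.continuous_det.comp (continuous_const.add continuous_id)
    have h0 : (0 : ℝ) < (1 + (0 : E →L[ℝ] E)).det := by
      rw [add_zero]; simp [ContinuousLinearMap.det]
    have := hcont.continuousAt.eventually (lt_mem_nhds h0)
    obtain ⟨d, hd, hh⟩ := Metric.eventually_nhds_iff.1 this
    exact ⟨d, hd, fun A hA => hh (by simpa using hA)⟩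
  -- volume computation for small t
  let μ : Measure E := Measure.addHaar
  have hmain : ∀ t : ℝ, 0 ≤ t → t ≤ 1 → t * L < 1 → t * L < d →
      ∫ x in B, (1 + t • D x).det ∂μ = μ.real B := by
    intro t ht ht1 htL htd
    let F : E → E := fun x => x + t • h x
    have hF' : ∀ x ∈ B, HasFDerivWithinAt F (1 + t • D x) B x := fun x hx =>
      ((hasFDerivAt_id x).add ((hhd x hx).const_smul t)).hasFDerivWithinAt
    have hinj : InjOn F B := by
      intro x hx y hy hxy
      have e : y - x = - (t • (h y - h x)) := by
        simp only [F] at hxy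
        rw [smul_sub]
        have : y - x = t • h x - t • h y := by
          rw [sub_eq_sub_iff_add_eq_add, ← hxy, add_comm]
        rw [this]; abel
      have h1 := hLip x hx y hy
      have h2 : ‖y - x‖ = t * ‖h y - h x‖ := by
        conv_lhs => rw [e]
        rw [norm_neg, norm_smul, Real.norm_of_nonneg ht]
      have h3 : ‖y - x‖ ≤ (t * L) * ‖y - x‖ := by
        calc ‖y - x‖ = t * ‖h y - h x‖ := h2
          _ ≤ t * (L * ‖y - x‖) := by gcongr
          _ = _ := by ring
      have h4 : ‖y - x‖ = 0 := by nlinarith [norm_nonneg (y - x)]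
      exact (sub_eq_zero.1 (norm_eq_zero.1 h4)).symm
    have himg : F '' B = B := by
      apply Subset.antisymm
      · rintro _ ⟨x, hx, rfl⟩
        have hx1 : ‖x‖ ≤ 1 := by simpa [hB] using hx
        have e : F x = (1 - t) • x + t • r x := by
          simp only [F, h]; module
        rw [e]
        apply (convex_closedBall (0 : E) 1) hx
        · simp [hr1 x (hBU hx)]
        · linarith
        · exact ht
        · ring
      · intro y hy
        have hcon : ContractingWith (Real.toNNReal (t * L)) (fun x => y - t • k x) := by
          refine ⟨by rw [← NNReal.coe_lt_coe, Real.coe_toNNReal _ (by positivity)]; simpa using htL, ?_⟩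
          apply LipschitzWith.of_dist_le_mul
          intro a b
          rw [dist_eq_norm, dist_eq_norm, Real.coe_toNNReal _ (by positivity)]
          have e : y - t • k a - (y - t • k b) = t • (k b - k a) := by module
          rw [e, norm_smul, Real.norm_of_nonneg ht, norm_sub_rev a b, mul_assoc]
          gcongr
          exact hkLip a b
        have hfix : y - t • k (ContractingWith.fixedPoint _ hcon) = ContractingWith.fixedPoint _ hcon :=
          hcon.fixedPoint_isFixedPt
        generalize ContractingWith.fixedPoint _ hcon = x at hfix
        by_cases hx : x ∈ B
        · refine ⟨x, hx, ?_⟩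
          simp only [F]
          rw [← hkB x hx]
          nth_rewrite 1 [← hfix]
          abel
        · rw [hkn x hx, smul_zero, sub_zero] at hfix
          exact absurd (hfix ▸ hy) hx
    have hI := integral_image_eq_integral_abs_det_fderiv_smul μ measurableSet_closedBall hF' hinj
      (fun _ => (1 : ℝ))
    rw [himg] at hI
    have e1 : ∫ x in B, (1 : ℝ) ∂μ = μ.real B := by simp
    rw [← e1, hI]
    apply setIntegral_congr_fun measurableSet_closedBall
    intro x hx
    have : 0 < (1 + t • D x).det := by
      apply hdet
      rw [norm_smul, Real.norm_of_nonneg ht]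
      exact lt_of_le_of_lt (by gcongr; exact hL x hx) htd
    simp only [smul_eq_mul, mul_one]
    exact (abs_of_pos this).symm
  -- det vanishes at t = 1
  have hzero : ∀ x ∈ B, (1 + (1 : ℝ) • D x).det = 0 := by
    intro x hx
    have e : 1 + (1 : ℝ) • D x = fderiv ℝ r x := by simp [D]
    rw [e]
    by_contra hne
    have hsurj : Function.Surjective (fderiv ℝ r x) := by
      have := (LinearMap.isUnit_iff_isUnit_det (fderiv ℝ r x : E →ₗ[ℝ] E)).2 (isUnit_iff_ne_zero.2 hne)
      exact ((Module.End.isUnit_iff _).1 this).2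
    obtain ⟨v, hv⟩ := hsurj (r x)
    have hn : HasFDerivAt (fun y => inner ℝ (r y) (r y)) _ x := (hrd x hx).inner ℝ (hrd x hx)
    have hn2 : HasFDerivAt (fun y => inner ℝ (r y) (r y)) (0 : E →L[ℝ] ℝ) x := by
      apply (hasFDerivAt_const (1 : ℝ) x).congr_of_eventuallyEq
      filter_upwards [hU.mem_nhds (hBU hx)] with y hy
      rw [real_inner_self_eq_norm_sq, hr1 y hy]; norm_num
    have := congrArg (fun T : E →L[ℝ] ℝ => T v) (hn.unique hn2)
    simp [hv, hr1 x (hBU hx)] at this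
  -- interpolation
  obtain ⟨N, hN⟩ : ∃ N, N = Module.finrank ℝ E := ⟨_, rfl⟩
  let S := Finset.range (N + 1)
  obtain ⟨δ, hδ, hδ1, hδ2, hδ3⟩ : ∃ δ : ℝ, 0 < δ ∧ δ * L < 1 ∧ δ * L < d ∧ δ ≤ 1 := by
    have hm : 0 < min 1 d := lt_min one_pos hd
    refine ⟨min (min 1 d / (2 * L)) 1, by positivity, ?_, ?_, min_le_right _ _⟩
    all_goals
      have : min (min 1 d / (2 * L)) 1 * L ≤ min 1 d / (2 * L) * L := by
        gcongr; exact min_le_left _ _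
      have e : min 1 d / (2 * L) * L = min 1 d / 2 := by field_simp
      have := min_le_left 1 d
      have := min_le_right 1 d
      linarith
  let v : ℕ → ℝ := fun j => δ / (j + 1)
  have hv0 : ∀ j, 0 ≤ v j := fun j => by positivity
  have hvδ : ∀ j, v j ≤ δ := fun j => div_le_self hδ.le (by simp)
  have hvinj : InjOn v S := by
    intro i _ j _ hij
    simp only [v] at hij
    have hi : (i : ℝ) + 1 ≠ 0 := by positivity
    have hj : (j : ℝ) + 1 ≠ 0 := by positivity
    rw [div_eq_div_iff hi hj] at hij
    have := mul_left_cancel₀ hδ.ne' hij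
    have : (j : ℝ) = i := by linarith
    exact_mod_cast this.symm
  let c : ℕ → ℝ := fun j => (Lagrange.basis S v j).eval 1
  have hc1 : ∑ j ∈ S, c j = 1 := by
    have := congrArg (Polynomial.eval 1) (Lagrange.sum_basis hvinj ⟨0, by simp [S]⟩)
    simpa [Polynomial.eval_finsetSum] using this
  have hinterp : ∀ A : E →L[ℝ] E, (1 + (1 : ℝ) • A).det = ∑ j ∈ S, c j * (1 + v j • A).det := by
    intro A
    obtain ⟨P, hP, hPe⟩ := det_one_add_smul_poly A
    have hdeg : P.degree < S.card := by
      refine lt_of_le_of_lt Polynomial.degree_le_natDegree ?_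
      rw [Finset.card_range, hN]
      exact_mod_cast Nat.lt_succ_of_le hP
    have := congrArg (Polynomial.eval 1) (Lagrange.eq_interpolate hvinj hdeg)
    rw [Lagrange.interpolate_apply, Polynomial.eval_finsetSum] at this
    rw [← hPe, this]
    refine Finset.sum_congr rfl fun j _ => ?_
    rw [Polynomial.eval_mul, Polynomial.eval_C, hPe, mul_comm]
  have hint : ∀ t : ℝ, IntegrableOn (fun x => (1 + t • D x).det) B μ := by
    intro t
    apply ContinuousOn.integrableOn_compact hBc
    exact ContinuousLinearMap.continuous_det.comp_continuousOn
      (continuousOn_const.add (hDc.const_smul t))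
  have h1 : ∫ x in B, (1 + (1 : ℝ) • D x).det ∂μ = 0 := by
    rw [setIntegral_congr_fun measurableSet_closedBall hzero]; simp
  have h2 : ∫ x in B, (1 + (1 : ℝ) • D x).det ∂μ = μ.real B := by
    simp_rw [hinterp]
    rw [integral_finsetSum _ fun j _ => (hint (v j)).const_mul _]
    simp_rw [integral_const_mul]
    rw [Finset.sum_congr rfl fun j _ => by
      rw [hmain (v j) (hv0 j) ((hvδ j).trans hδ3) (lt_of_le_of_lt (by gcongr; exact hvδ j) hδ1)
        (lt_of_le_of_lt (by gcongr; exact hvδ j) hδ2)], ← Finset.sum_mul, hc1, one_mul]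
  have h3 : 0 < μ.real B := by
    apply ENNReal.toReal_pos
    · exact (Metric.measure_closedBall_pos μ 0 one_pos).ne'
    · exact hBc.measure_lt_top.ne
  linarith

theorem brouwer_half {E : Type*} [NormedAddCommGroup E] [InnerProductSpace ℝ E]
    [FiniteDimensional ℝ E] (F : E → E) (hF : Continuous F) (hb : ∀ x, ‖F x‖ ≤ 1 / 2) :
    ∃ x, F x = x := by
  by_contra! hne
  obtain ⟨ε, hε, hε2, hεF⟩ : ∃ ε : ℝ, 0 < ε ∧ ε ≤ 1 / 2 ∧ ∀ x, ‖x‖ ≤ 1 → ε ≤ ‖F x - x‖ := by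
    obtain ⟨x0, -, hx0⟩ := (isCompact_closedBall (0 : E) 1).exists_isMinOn ⟨0, by simp⟩
      (f := fun x => ‖F x - x‖) (by fun_prop)
    have : 0 < ‖F x0 - x0‖ := norm_pos_iff.2 (sub_ne_zero.2 (hne x0))
    exact ⟨min ‖F x0 - x0‖ (1 / 2), by positivity, min_le_right _ _, fun x hx =>
      (min_le_left _ _).trans (hx0 (by simpa using hx))⟩
  obtain ⟨p, hp, hpF, -⟩ := hF.exists_contDiff_approx 1 (ε := fun _ => ε) continuous_const
    (fun _ => hε)
  have hp1 : ∀ x, ‖p x‖ < 1 := fun x => by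
    have h1 := hpF x
    rw [dist_eq_norm] at h1
    have h2 := norm_add_le (p x - F x) (F x)
    rw [sub_add_cancel] at h2
    linarith [hb x]
  have hpne : ∀ x, x - p x ≠ 0 := by
    intro x hx
    have hx' : x = p x := sub_eq_zero.1 hx
    have hx1 : ‖x‖ ≤ 1 := by rw [hx']; exact (hp1 x).le
    have h1 := hpF x
    rw [dist_eq_norm, ← hx', norm_sub_rev] at h1
    linarith [hεF x hx1]
  let u : E → E := fun x => x - p x
  have hu : ContDiff ℝ 1 u := contDiff_id.sub hp
  let s : E → ℝ := fun x => inner ℝ x (u x)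
  let q : E → ℝ := fun x => inner ℝ (u x) (u x)
  let d : E → ℝ := fun x => s x ^ 2 + q x * (1 - inner ℝ x x)
  have hs : ContDiff ℝ 1 s := contDiff_id.inner ℝ hu
  have hq : ContDiff ℝ 1 q := hu.inner ℝ hu
  have hd : ContDiff ℝ 1 d := (hs.pow 2).add (hq.mul (contDiff_const.sub (contDiff_id.inner ℝ contDiff_id)))
  have hq0 : ∀ x, 0 < q x := fun x => real_inner_self_pos.2 (hpne x)
  have hs1 : ∀ x, ‖x‖ = 1 → 0 < s x := by
    intro x hx
    have h1 : s x = 1 - inner ℝ x (p x) := by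
      simp only [s, u]; rw [inner_sub_right, real_inner_self_eq_norm_sq, hx]; norm_num
    have h2 := real_inner_le_norm x (p x)
    rw [hx, one_mul] at h2
    linarith [hp1 x]
  let l : E → ℝ := fun x => (-s x + Real.sqrt (d x)) / q x
  apply no_retraction (fun x => x + l x • u x) {x | 0 < d x}
    (isOpen_lt continuous_const hd.continuous)
  · intro x hx
    have hx1 : ‖x‖ ≤ 1 := by simpa using hx
    simp only [mem_ofPred_eq, d]
    rw [real_inner_self_eq_norm_sq]
    rcases hx1.eq_or_lt with h | h
    · have := hs1 x h
      rw [h]; norm_num; positivity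
    · have h3 : 0 < 1 - ‖x‖ ^ 2 := by nlinarith [norm_nonneg x]
      have := hq0 x
      positivity
  · apply contDiff_id.contDiffOn.add
    apply ContDiffOn.smul _ hu.contDiffOn
    apply ContDiffOn.div _ hq.contDiffOn (fun x _ => (hq0 x).ne')
    apply hs.neg.contDiffOn.add
    exact hd.contDiffOn.sqrt (fun x hx => (ne_of_gt hx))
  · intro x hx
    have hlq : l x * q x = -s x + Real.sqrt (d x) := div_mul_cancel₀ _ (hq0 x).ne'
    have hsq : Real.sqrt (d x) ^ 2 = s x ^ 2 + q x * (1 - inner ℝ x x) := Real.sq_sqrt (le_of_lt hx)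
    have hn : ‖x + l x • u x‖ ^ 2 = inner ℝ x x + 2 * (l x * s x) + l x ^ 2 * q x := by
      rw [← real_inner_self_eq_norm_sq, inner_add_left, inner_add_right, inner_add_right,
        inner_smul_left, inner_smul_right, inner_smul_right, inner_smul_left, real_inner_comm x (u x)]
      simp only [s, q, conj_trivial]
      ring
    have h1 : q x * (‖x + l x • u x‖ ^ 2 - 1) = 0 := by
      rw [hn]
      have : q x * (inner ℝ x x + 2 * (l x * s x) + l x ^ 2 * q x - 1)
        = q x * (inner ℝ x x - 1) + (l x * q x + s x) ^ 2 - s x ^ 2 := by ring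
      rw [this, hlq]
      have e : -s x + Real.sqrt (d x) + s x = Real.sqrt (d x) := by ring
      rw [e, hsq]; ring
    have h2 : ‖x + l x • u x‖ ^ 2 = 1 := by
      have := (mul_eq_zero.1 h1).resolve_left (hq0 x).ne'
      linarith
    exact (pow_eq_one_iff_of_nonneg (norm_nonneg _) two_ne_zero).1 h2
  · intro x hx
    have : l x = 0 := by
      simp only [l, d]
      rw [real_inner_self_eq_norm_sq, hx]
      norm_num
      rw [Real.sqrt_sq (hs1 x hx).le]; simp
    simp [this]

theorem exists_retraction_convex {E : Type*} [NormedAddCommGroup E] [InnerProductSpace ℝ E]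
    [CompleteSpace E] (K : Set E) (hK : IsClosed K) (hc : Convex ℝ K) (hn : K.Nonempty) :
    ∃ P : E → E, Continuous P ∧ (∀ x, P x ∈ K) ∧ ∀ x ∈ K, P x = x := by
  choose P hPK hP using exists_norm_eq_iInf_of_complete_convex hn hK.isComplete hc
  have hP' : ∀ x, ∀ w ∈ K, inner ℝ (x - P x) (w - P x) ≤ 0 := fun x =>
    (norm_eq_iInf_iff_real_inner_le_zero hc (hPK x)).1 (hP x)
  refine ⟨P, ?_, hPK, ?_⟩
  · apply LipschitzWith.continuous (K := 1)
    apply LipschitzWith.of_dist_le_mul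
    intro x y
    rw [dist_eq_norm, dist_eq_norm, NNReal.coe_one, one_mul]
    have h1 := hP' x _ (hPK y)
    have h2 := hP' y _ (hPK x)
    have h3 : inner ℝ (P x - P y) (P x - P y) ≤ inner ℝ (x - y) (P x - P y) := by
      have e : inner ℝ (x - y) (P x - P y) - inner ℝ (P x - P y) (P x - P y)
        = - inner ℝ (x - P x) (P y - P x) - inner ℝ (y - P y) (P x - P y) := by
        simp only [inner_sub_left, inner_sub_right]; ring
      linarith
    rw [real_inner_self_eq_norm_sq] at h3
    have h4 := real_inner_le_norm (x - y) (P x - P y)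
    by_contra! hlt
    nlinarith [norm_nonneg (x - y), norm_nonneg (P x - P y)]
  · intro x hx
    have := hP' x x hx
    rw [real_inner_self_nonpos] at this
    exact (sub_eq_zero.1 this).symm

theorem brouwer_convex {V : Type*} [NormedAddCommGroup V] [NormedSpace ℝ V]
    [FiniteDimensional ℝ V] (K : Set V) (hK : IsCompact K) (hc : Convex ℝ K) (hn : K.Nonempty)
    (F : V → V) (hF : ContinuousOn F K) (hm : MapsTo F K K) : ∃ x ∈ K, F x = x := by
  let e : V ≃L[ℝ] EuclideanSpace ℝ (Fin (Module.finrank ℝ V)) := toEuclidean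
  have hK' : IsCompact (e '' K) := hK.image e.continuous
  have hc' : Convex ℝ (e '' K) := hc.is_linear_image ⟨e.map_add, e.map_smul⟩
  obtain ⟨P, hPc, hPK, hPid⟩ := exists_retraction_convex (e '' K) hK'.isClosed hc' (hn.image _)
  have hPK2 : ∀ x, e.symm (P x) ∈ K := by
    intro x
    obtain ⟨w, hw, hwe⟩ := hPK x
    rw [← hwe]; simpa using hw
  let G := fun x => e (F (e.symm (P x)))
  have hG : Continuous G := e.continuous.comp
    (hF.comp_continuous (e.symm.continuous.comp hPc) hPK2)
  have hGK : ∀ x, G x ∈ e '' K := fun x => mem_image_of_mem _ (hm (hPK2 x))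
  obtain ⟨R, hR, hRb⟩ : ∃ R : ℝ, 0 < R ∧ ∀ x, ‖G x‖ ≤ R := by
    obtain ⟨R, hR⟩ := hK'.isBounded.exists_norm_le
    exact ⟨max R 1, by positivity, fun x => (hR _ (hGK x)).trans (le_max_left _ _)⟩
  obtain ⟨x, hx⟩ := brouwer_half (fun x => (2 * R)⁻¹ • G ((2 * R) • x)) (by fun_prop) (by
    intro x
    rw [norm_smul, Real.norm_of_nonneg (by positivity)]
    calc (2 * R)⁻¹ * ‖G ((2 * R) • x)‖ ≤ (2 * R)⁻¹ * R := by gcongr; exact hRb _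
      _ = 1 / 2 := by field_simp)
  have hfix : G ((2 * R) • x) = (2 * R) • x := by
    nth_rewrite 2 [← hx]
    rw [smul_inv_smul₀ (by positivity)]
  generalize (2 * R) • x = w at hfix
  have hw : P w = w := hPid w (hfix ▸ hGK w)
  refine ⟨e.symm (P w), hPK2 w, ?_⟩
  apply e.injective
  rw [e.apply_symm_apply, hw]
  simpa [G, hw] using hfix

theorem exists_comparable_point {V : Type*} [NormedAddCommGroup V] [NormedSpace ℝ V]
    [FiniteDimensional ℝ V] (C : Set V) (hCconv : Convex ℝ C) (h0 : (0 : V) ∈ C)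
    (hCscal : ∀ (c : ℝ), 0 ≤ c → ∀ x ∈ C, c • x ∈ C)
    (a b : V) (hab : b - a ∈ C) (hne : a ≠ b)
    (hK : IsCompact {v : V | v - a ∈ C ∧ b - v ∈ C}) (G : V → V)
    (hG : ContinuousOn G {v : V | v - a ∈ C ∧ b - v ∈ C})
    (hm : MapsTo G {v : V | v - a ∈ C ∧ b - v ∈ C} {v : V | v - a ∈ C ∧ b - v ∈ C}) :
    ∃ x, x - a ∈ C ∧ b - x ∈ C ∧ x ≠ a ∧ x ≠ b ∧ (G x - x ∈ C ∨ x - G x ∈ C) := by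
  set K := {v : V | v - a ∈ C ∧ b - v ∈ C} with hKdef
  obtain ⟨φ, hφ⟩ := SeparatingDual.exists_eq_one (R := ℝ) (sub_ne_zero.2 hne.symm)
  let ψ : V → ℝ := fun x => φ (x - a)
  have hψc : Continuous ψ := by fun_prop
  have hψa : ψ a = 0 := by simp [ψ]
  have hψb : ψ b = 1 := hφ
  have hKc : Convex ℝ K := by
    have h1 : Convex ℝ {v : V | v - a ∈ C} := by
      intro x hx y hy s t hs ht hst
      have := hCconv hx hy hs ht hst
      have e : s • x + t • y - a = s • (x - a) + t • (y - a) := by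
        have : a = (s + t) • a := by rw [hst, one_smul]
        nth_rewrite 1 [this]; module
      simpa only [mem_ofPred_eq, e] using this
    have h2 : Convex ℝ {v : V | b - v ∈ C} := by
      intro x hx y hy s t hs ht hst
      have := hCconv hx hy hs ht hst
      have e : b - (s • x + t • y) = s • (b - x) + t • (b - y) := by
        have : b = (s + t) • b := by rw [hst, one_smul]
        nth_rewrite 1 [this]; module
      simpa only [mem_ofPred_eq, e] using this
    exact h1.inter h2
  have haK : a ∈ K := ⟨by simpa using h0, hab⟩
  have hbK : b ∈ K := ⟨hab, by simpa using h0⟩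
  have hψlin : ∀ (p : V) (s : ℝ) (w : V), ψ (p + s • (w - p)) = ψ p + s * (ψ w - ψ p) := by
    intro p s w; simp only [ψ, map_sub, map_add, map_smul, smul_eq_mul]; ring
  let L := K ∩ {x | ψ x = 1 / 2}
  have hLcomp : IsCompact L := hK.inter_right (isClosed_eq hψc continuous_const)
  have hLconv : Convex ℝ L := by
    apply hKc.inter
    intro x hx y hy s t hs ht hst
    simp only [mem_ofPred_eq] at hx hy ⊢
    have e : ψ (s • x + t • y) = s * ψ x + t * ψ y := by
      simp only [ψ, map_sub, map_add, map_smul, smul_eq_mul]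
      linear_combination (φ a) * hst
    rw [e, hx, hy, ← add_mul, hst, one_mul]
  have hseg : ∀ p ∈ K, ∀ w ∈ K, ∀ s : ℝ, 0 ≤ s → s ≤ 1 → p + s • (w - p) ∈ K := by
    intro p hp w hw s hs0 hs1
    have := hKc hp hw (sub_nonneg.2 hs1) hs0 (by ring)
    have e : p + s • (w - p) = (1 - s) • p + s • w := by module
    rwa [e]
  have hLne : L.Nonempty := ⟨a + (1 / 2 : ℝ) • (b - a), hseg a haK b hbK _ (by norm_num) (by norm_num),
    by simp only [mem_ofPred_eq]; rw [hψlin, hψa, hψb]; norm_num⟩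
  let α : V → ℝ := fun w => (1 / 2) / max (ψ w) (1 / 2)
  let β : V → ℝ := fun w => (1 / 2) / max (1 - ψ w) (1 / 2)
  have hαc : Continuous α := continuous_const.div (by fun_prop)
    (fun w => (lt_of_lt_of_le (by norm_num) (le_max_right _ _)).ne')
  have hβc : Continuous β := continuous_const.div (by fun_prop)
    (fun w => (lt_of_lt_of_le (by norm_num) (le_max_right _ _)).ne')
  have hα0 : ∀ w, 0 ≤ α w := fun w => by positivity
  have hβ0 : ∀ w, 0 ≤ β w := fun w => by positivity
  have hα1 : ∀ w, α w ≤ 1 := fun w => div_le_one_of_le₀ (le_max_right _ _) (by positivity)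
  have hβ1 : ∀ w, β w ≤ 1 := fun w => div_le_one_of_le₀ (le_max_right _ _) (by positivity)
  let H : V → V := fun w => b + β w • ((a + α w • (w - a)) - b)
  have hHc : Continuous H := by fun_prop
  have hH1 : ∀ w, 1 / 2 ≤ ψ w → H w = a + α w • (w - a) := by
    intro w hw
    have : β w = 1 := by
      simp only [β]; rw [max_eq_right (by linarith)]; norm_num
    simp only [H, this]; module
  have hH2 : ∀ w, ψ w ≤ 1 / 2 → H w = b + β w • (w - b) := by
    intro w hw
    have : α w = 1 := by
      simp only [α]; rw [max_eq_right (by linarith)]; norm_num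
    simp only [H, this]; module
  have hHK : ∀ w ∈ K, H w ∈ L := by
    intro w hw
    refine ⟨hseg b hbK _ (hseg a haK w hw _ (hα0 w) (hα1 w)) _ (hβ0 w) (hβ1 w), ?_⟩
    simp only [mem_ofPred_eq]
    rcases le_total (1 / 2) (ψ w) with h | h
    · rw [hH1 w h, hψlin, hψa]
      simp only [α]; rw [max_eq_left h]
      have : ψ w ≠ 0 := by linarith
      field_simp; ring
    · rw [hH2 w h, hψlin, hψb]
      simp only [β]; rw [max_eq_left (by linarith)]
      have : 1 - ψ w ≠ 0 := by linarith
      field_simp; ring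
  obtain ⟨x, hxL, hx⟩ := brouwer_convex L hLcomp hLconv hLne (fun x => H (G x))
    (hHc.comp_continuousOn (hG.mono inter_subset_left)) (fun x hx => hHK _ (hm hx.1))
  have hx2 : ψ x = 1 / 2 := hxL.2
  refine ⟨x, hxL.1.1, hxL.1.2, ?_, ?_, ?_⟩
  · rintro rfl; rw [hψa] at hx2; norm_num at hx2
  · rintro rfl; rw [hψb] at hx2; norm_num at hx2
  · have hGx := hm hxL.1
    rcases le_total (1 / 2) (ψ (G x)) with h | h
    · left
      rw [hH1 _ h] at hx
      have e : G x - x = (1 - α (G x)) • (G x - a) := by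
        nth_rewrite 2 [← hx]; module
      rw [e]
      exact hCscal _ (sub_nonneg.2 (hα1 _)) _ hGx.1
    · right
      rw [hH2 _ h] at hx
      have e : x - G x = (1 - β (G x)) • (b - G x) := by
        nth_rewrite 1 [← hx]; module
      rw [e]
      exact hCscal _ (sub_nonneg.2 (hβ1 _)) _ hGx.2

theorem isCompact_orderInterval {V : Type*} [NormedAddCommGroup V] [NormedSpace ℝ V]
    [FiniteDimensional ℝ V] (C : Set V)
    (hCscal : ∀ (c : ℝ), 0 ≤ c → ∀ x ∈ C, c • x ∈ C)
    (hCpointed : ∀ x, x ∈ C → -x ∈ C → x = 0) (hCclosed : IsClosed C) (a b : V) :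
    IsCompact {v : V | v - a ∈ C ∧ b - v ∈ C} := by
  have hcl : IsClosed {v : V | v - a ∈ C ∧ b - v ∈ C} :=
    (hCclosed.preimage (f := fun v => v - a) (by fun_prop)).inter
      (hCclosed.preimage (f := fun v => b - v) (by fun_prop))
  have hS : IsCompact {w : V | -w ∈ C ∧ ‖w‖ = 1} := by
    have : {w : V | -w ∈ C ∧ ‖w‖ = 1} = Metric.sphere 0 1 ∩ (fun w => -w) ⁻¹' C := by
      ext w; simp [and_comm]
    rw [this]
    exact (isCompact_sphere 0 1).inter_right (hCclosed.preimage continuous_neg)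
  have hdisj : Disjoint {w : V | -w ∈ C ∧ ‖w‖ = 1} C := by
    rw [Set.disjoint_left]
    rintro w ⟨hw, hw1⟩ hwC
    have := hCpointed w hwC hw
    rw [this] at hw1; simp at hw1
  obtain ⟨ρ, hρ, hd⟩ := Metric.exists_pos_forall_lt_edist hS hCclosed hdisj
  apply Metric.isCompact_of_isClosed_isBounded hcl
  have hρ' : (0 : ℝ) < ρ := hρ
  rw [Metric.isBounded_iff_subset_closedBall a]
  refine ⟨‖b - a‖ / ρ, fun v hv => ?_⟩
  rw [Metric.mem_closedBall, dist_eq_norm]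
  by_cases hz : ‖v - a‖ = 0
  · rw [hz]; positivity
  have hpos : 0 < ‖v - a‖ := lt_of_le_of_ne (norm_nonneg _) (Ne.symm hz)
  have h1 := hd (-(‖v - a‖⁻¹ • (v - a))) ⟨by rw [neg_neg]; exact hCscal _ (by positivity) _ hv.1, by
    rw [norm_neg, norm_smul, norm_inv, norm_norm, inv_mul_cancel₀ hz]⟩ (‖v - a‖⁻¹ • (b - v))
    (hCscal _ (by positivity) _ hv.2)
  have e : -(‖v - a‖⁻¹ • (v - a)) - ‖v - a‖⁻¹ • (b - v) = -(‖v - a‖⁻¹ • (b - a)) := by module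
  rw [edist_dist, dist_eq_norm, e, norm_neg, norm_smul, norm_inv, norm_norm,
    ENNReal.coe_nnreal_eq, ENNReal.ofReal_lt_ofReal_iff_of_nonneg hρ'.le] at h1
  rw [le_div_iff₀ hρ']
  rw [inv_mul_eq_div, lt_div_iff₀ hpos] at h1
  linarith

theorem exists_greatest_of_chain {V : Type*} [NormedAddCommGroup V] [NormedSpace ℝ V]
    (C : Set V) (h0 : (0 : V) ∈ C) (hadd : ∀ x ∈ C, ∀ y ∈ C, x + y ∈ C) (hCclosed : IsClosed C)
    (K : Set V) (hK : IsCompact K) (hne : K.Nonempty)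
    (hch : ∀ a ∈ K, ∀ b ∈ K, b - a ∈ C ∨ a - b ∈ C) : ∃ a ∈ K, ∀ m ∈ K, a - m ∈ C := by
  have htr : ∀ x y z : V, x - y ∈ C → y - z ∈ C → x - z ∈ C := fun x y z h1 h2 => by
    simpa using hadd _ h1 _ h2
  have := hne.to_subtype
  have hcl : ∀ m : K, IsClosed {x | x - (m : V) ∈ C} := fun m =>
    hCclosed.preimage (f := fun v => v - (m : V)) (by fun_prop)
  have key := IsCompact.nonempty_iInter_of_directed_nonempty_isCompact_isClosed
    (fun m : K => K ∩ {x | x - (m : V) ∈ C}) ?_ (fun m => ⟨m, m.2, by simpa using h0⟩)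
    (fun m => hK.inter_right (hcl m)) (fun m => hK.isClosed.inter (hcl m))
  · obtain ⟨a, ha⟩ := key
    rw [mem_iInter] at ha
    exact ⟨a, (ha (Classical.arbitrary K)).1, fun m hm => (ha ⟨m, hm⟩).2⟩
  · intro m n
    rcases hch m m.2 n n.2 with h | h
    · exact ⟨n, fun x hx => ⟨hx.1, htr _ _ _ hx.2 h⟩, Subset.rfl⟩
    · exact ⟨m, Subset.rfl, fun x hx => ⟨hx.1, htr _ _ _ hx.2 h⟩⟩

theorem le_image_of_dense {V : Type*} [NormedAddCommGroup V] [NormedSpace ℝ V]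
    (C : Set V) (h0 : (0 : V) ∈ C) (hadd : ∀ x ∈ C, ∀ y ∈ C, x + y ∈ C)
    (hCscal : ∀ (c : ℝ), 0 ≤ c → ∀ x ∈ C, c • x ∈ C)
    (hCclosed : IsClosed C) (hCsolid : (interior C).Nonempty)
    (Ω : Set V) (hΩopen : IsOpen Ω) (f : Ω → Ω)
    (hmono : ∀ x y : Ω, ((y : V) - (x : V)) ∈ C → ((f y : V) - (f x : V)) ∈ C)
    (hdense : Dense {x : Ω | ∃ p : ℕ, 1 ≤ p ∧ f^[p] x = x})
    (r : ℕ) (x : Ω) (hx : (f^[r] x : V) - x ∈ C) : (x : V) - (f^[r] x : V) ∈ C := by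
  have htr : ∀ x y z : V, x - y ∈ C → y - z ∈ C → x - z ∈ C := fun x y z h1 h2 => by
    simpa using hadd _ h1 _ h2
  have hit : ∀ n : ℕ, ∀ x y : Ω, ((y : V) - (x : V)) ∈ C → ((f^[n] y : V) - (f^[n] x : V)) ∈ C := by
    intro n
    induction n with
    | zero => intro x y h; simpa using h
    | succ n ih =>
      intro x y h
      rw [Function.iterate_succ_apply, Function.iterate_succ_apply]
      exact ih _ _ (hmono _ _ h)
  have hup : ∀ k : ℕ, (((f^[r])^[k + 1] x : Ω) : V) - (f^[r] x : V) ∈ C := by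
    intro k
    induction k with
    | zero => simpa using h0
    | succ k ih =>
      have h1 := hit r _ _ ih
      have h2 := hit r _ _ hx
      rw [Function.iterate_succ_apply' _ (k + 1)]
      exact htr _ _ _ h1 h2
  have hper : ∀ p : Ω, (∃ k : ℕ, 1 ≤ k ∧ f^[k] p = p) → (p : V) - x ∈ C →
      (p : V) - (f^[r] x : V) ∈ C := by
    rintro p ⟨k, hk, hp⟩ hpx
    obtain ⟨j, rfl⟩ : ∃ j, k = j + 1 := ⟨k - 1, by omega⟩
    have h1 : (f^[r])^[j + 1] p = p := by
      rw [← Function.iterate_mul, mul_comm, Function.iterate_mul]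
      exact Function.iterate_fixed hp r
    have h2 := hit (r * (j + 1)) _ _ hpx
    rw [Function.iterate_mul, h1] at h2
    exact htr _ _ _ h2 (hup j)
  have hcl : x ∈ closure {p : Ω | (∃ k : ℕ, 1 ≤ k ∧ f^[k] p = p) ∧ (p : V) - x ∈ C} := by
    rw [mem_closure_iff]
    intro W hW hxW
    obtain ⟨e, he⟩ := hCsolid
    obtain ⟨W', hW', rfl⟩ := isOpen_induced_iff.1 hW
    have hev : ∀ᶠ δ : ℝ in 𝓝[>] 0, (x : V) + δ • e ∈ W' ∩ Ω := by
      apply nhdsWithin_le_nhds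
      have hc : ContinuousAt (fun δ : ℝ => (x : V) + δ • e) 0 := by fun_prop
      apply hc.eventually_mem
      simpa using (hW'.inter hΩopen).mem_nhds ⟨hxW, x.2⟩
    obtain ⟨δ, hδ, hδ0⟩ := (hev.and self_mem_nhdsWithin).exists
    have hδ0' : (0 : ℝ) < δ := hδ0
    let O : Set Ω := {p | (p : V) ∈ W' ∧ δ⁻¹ • ((p : V) - x) ∈ interior C}
    have hO : IsOpen O := by
      apply IsOpen.inter
      · exact hW'.preimage continuous_subtype_val
      · exact isOpen_interior.preimage (f := fun p : Ω => δ⁻¹ • ((p : V) - x)) (by fun_prop)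
    obtain ⟨p, hpO, hpper⟩ := hdense.inter_open_nonempty O hO ⟨⟨_, hδ.2⟩, hδ.1, by
      simpa [smul_smul, inv_mul_cancel₀ hδ0'.ne'] using he⟩
    refine ⟨p, hpO.1, hpper, ?_⟩
    have := hCscal δ hδ0'.le _ (interior_subset hpO.2)
    rwa [smul_inv_smul₀ hδ0'.ne'] at this
  have hclosed : IsClosed {p : Ω | (p : V) - (f^[r] x : V) ∈ C} :=
    hCclosed.preimage (f := fun p : Ω => (p : V) - (f^[r] x : V)) (by fun_prop)
  exact closure_minimal (fun p hp => hper p hp.1 hp.2) hclosed hcl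

/-- Between two strictly ordered fixed points `y ≪_C z` of `g = f^r` whose order
interval lies in `Ω`, there is a totally ordered connected set `M` of fixed
points of `g` containing `y` and `z` and contained in `[y,z]_C`. -/
theorem exists_connected_chain_of_fixed_points
    {V : Type*} [NormedAddCommGroup V] [NormedSpace ℝ V] [FiniteDimensional ℝ V]
    (C : Set V)
    (hCconv : Convex ℝ C)
    (hCscal : ∀ (c : ℝ), 0 ≤ c → ∀ x ∈ C, c • x ∈ C)
    (hCpointed : C ∩ (-C) = {0})
    (hCclosed : IsClosed C)
    (hCsolid : (interior C).Nonempty)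
    (Ω : Set V) (hΩopen : IsOpen Ω)
    (f : Ω ≃ₜ Ω)
    (hmono : ∀ x y : Ω, ((y : V) - (x : V)) ∈ C → ((f y : V) - (f x : V)) ∈ C)
    (hdense : Dense {x : Ω | ∃ p : ℕ, 1 ≤ p ∧ (⇑f)^[p] x = x})
    (r : ℕ) (hr : 1 ≤ r)
    (y z : V) (hy : y ∈ Ω) (hz : z ∈ Ω)
    (hyfix : (⇑f)^[r] ⟨y, hy⟩ = ⟨y, hy⟩)
    (hzfix : (⇑f)^[r] ⟨z, hz⟩ = ⟨z, hz⟩)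
    (hyz : z - y ∈ interior C)
    (hint : {v : V | v - y ∈ C ∧ z - v ∈ C} ⊆ Ω) :
    ∃ M : Set V, ∃ hMΩ : M ⊆ Ω,
      (∀ m, ∀ hm : m ∈ M, (⇑f)^[r] ⟨m, hMΩ hm⟩ = ⟨m, hMΩ hm⟩) ∧
      (∀ a ∈ M, ∀ b ∈ M, b - a ∈ C ∨ a - b ∈ C) ∧
      IsConnected M ∧ y ∈ M ∧ z ∈ M ∧
      (∀ m ∈ M, m - y ∈ C ∧ z - m ∈ C) := by
  classical
  have h0 : (0 : V) ∈ C := by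
    have : (0 : V) ∈ C ∩ (-C) := by rw [hCpointed]; rfl
    exact this.1
  have hpt : ∀ x, x ∈ C → -x ∈ C → x = 0 := by
    intro x h1 h2
    have : x ∈ C ∩ (-C) := ⟨h1, h2⟩
    rw [hCpointed] at this
    exact this
  have hadd : ∀ x ∈ C, ∀ y ∈ C, x + y ∈ C := by
    intro x hx y hy
    have h1 := hCconv hx hy (a := 1 / 2) (b := 1 / 2) (by norm_num) (by norm_num) (by norm_num)
    have h2 := hCscal 2 (by norm_num) _ h1
    have e : (2 : ℝ) • ((1 / 2 : ℝ) • x + (1 / 2 : ℝ) • y) = x + y := by module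
    rwa [e] at h2
  have htr : ∀ x y z : V, x - y ∈ C → y - z ∈ C → x - z ∈ C := fun x y z h1 h2 => by
    simpa using hadd _ h1 _ h2
  have hanti : ∀ x y : V, x - y ∈ C → y - x ∈ C → x = y := fun x y h1 h2 =>
    sub_eq_zero.1 (hpt _ h1 (by simpa using h2))
  -- comparable points are fixed
  have hcomp : ∀ x : Ω, ((⇑f)^[r] x : V) - x ∈ C ∨ (x : V) - ((⇑f)^[r] x : V) ∈ C →
      (⇑f)^[r] x = x := by
    intro x hx
    apply Subtype.ext
    rcases hx with hx | hx
    · exact hanti _ _ hx (le_image_of_dense C h0 hadd hCscal hCclosed hCsolid Ω hΩopen f hmono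
        hdense r x hx)
    · have := le_image_of_dense (-C) (by simpa using h0)
        (fun x hx y hy => by
          have := hadd _ hx _ hy
          rw [Set.mem_neg]; rwa [neg_add])
        (fun c hc x hx => by
          have := hCscal c hc _ hx
          rw [Set.mem_neg]; rwa [smul_neg] at this)
        hCclosed.neg
        (by
          obtain ⟨e, he⟩ := hCsolid
          refine ⟨-e, ?_⟩
          rw [mem_interior] at he ⊢
          obtain ⟨t, ht, hto, het⟩ := he
          exact ⟨-t, Set.neg_subset_neg.2 ht, hto.neg, by simpa using het⟩)
        Ω hΩopen f
        (fun x y hxy => by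
          rw [Set.mem_neg, neg_sub] at hxy ⊢
          exact hmono _ _ hxy)
        hdense r x (by rw [Set.mem_neg, neg_sub]; exact hx)
      rw [Set.mem_neg, neg_sub] at this
      exact hanti _ _ this hx
  have hit : ∀ n : ℕ, ∀ x y : Ω, ((y : V) - (x : V)) ∈ C →
      (((⇑f)^[n] y : V) - ((⇑f)^[n] x : V)) ∈ C := by
    intro n
    induction n with
    | zero => intro x y h; simpa using h
    | succ n ih =>
      intro x y h
      rw [Function.iterate_succ_apply, Function.iterate_succ_apply]
      exact ih _ _ (hmono _ _ h)
  -- extension of g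
  let G : V → V := fun v => if h : v ∈ Ω then ((⇑f)^[r] ⟨v, h⟩ : V) else v
  have hGΩ : ∀ v (h : v ∈ Ω), G v = ((⇑f)^[r] ⟨v, h⟩ : V) := fun v h => dif_pos h
  have hGc : ContinuousOn G Ω := by
    rw [continuousOn_iff_continuous_domRestrict]
    have : Ω.domRestrict G = fun x : Ω => ((⇑f)^[r] x : V) := by
      ext x; exact hGΩ x x.2
    rw [this]
    exact continuous_subtype_val.comp (f.continuous.iterate r)
  have hGfix : ∀ v (h : v ∈ Ω), G v = v → (⇑f)^[r] ⟨v, h⟩ = ⟨v, h⟩ := fun v h hv =>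
    Subtype.ext (by rw [← hGΩ v h]; exact hv)
  have hGcomp : ∀ v ∈ Ω, (G v - v ∈ C ∨ v - G v ∈ C) → G v = v := by
    intro v h hv
    rw [hGΩ v h] at hv ⊢
    exact congrArg Subtype.val (hcomp ⟨v, h⟩ hv)
  have hGm : ∀ v ∈ Ω, ∀ w ∈ Ω, w - v ∈ C → G w - G v ∈ C := by
    intro v hv w hw h
    rw [hGΩ v hv, hGΩ w hw]
    exact hit r ⟨v, hv⟩ ⟨w, hw⟩ h
  set I := {v : V | v - y ∈ C ∧ z - v ∈ C} with hI
  have hIc : IsCompact I := isCompact_orderInterval C hCscal hpt hCclosed y z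
  have hyzC : z - y ∈ C := interior_subset hyz
  have hyI : y ∈ I := ⟨by simpa using h0, hyzC⟩
  have hzI : z ∈ I := ⟨hyzC, by simpa using h0⟩
  let T : Set V := {v | v ∈ I ∧ G v = v}
  have hyT : y ∈ T := ⟨hyI, by rw [hGΩ y hy, hyfix]⟩
  have hzT : z ∈ T := ⟨hzI, by rw [hGΩ z hz, hzfix]⟩
  have hTcl : IsClosed T := by
    have h1 := (hGc.mono hint).sub continuousOn_id
    have h2 := h1.preimage_isClosed_of_isClosed hIc.isClosed (isClosed_singleton (x := (0 : V)))
    convert h2 using 1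
    ext v; simp [T, sub_eq_zero]
  let rel : V → V → Prop := fun a b => a ∈ T ∧ b ∈ T ∧ b - a ∈ C
  have hc0 : IsChain rel {y, z} := by
    rintro a (rfl | rfl) b (rfl | rfl) hab
    · exact absurd rfl hab
    · exact Or.inl ⟨hyT, hzT, hyzC⟩
    · exact Or.inr ⟨hyT, hzT, hyzC⟩
    · exact absurd rfl hab
  obtain ⟨M, hM, hMyz⟩ := hc0.exists_maxChain
  have hyM : y ∈ M := hMyz (by simp)
  have hzM : z ∈ M := hMyz (by simp)
  have hMT : M ⊆ T := by
    intro m hm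
    by_cases e : m = y
    · rw [e]; exact hyT
    · rcases hM.1 hm hyM e with h | h
      · exact h.1
      · exact h.2.1
  have hMch : ∀ a ∈ M, ∀ b ∈ M, b - a ∈ C ∨ a - b ∈ C := by
    intro a ha b hb
    by_cases e : a = b
    · left; rw [e]; simpa using h0
    · rcases hM.1 ha hb e with h | h
      · exact Or.inl h.2.2
      · exact Or.inr h.2.2
  have hMmax : ∀ x ∈ T, (∀ m ∈ M, m - x ∈ C ∨ x - m ∈ C) → x ∈ M := by
    intro x hxT hx
    have hins : IsChain rel (insert x M) := hM.1.insert (fun m hm _ => by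
      rcases hx m hm with h | h
      · exact Or.inl ⟨hxT, hMT hm, h⟩
      · exact Or.inr ⟨hMT hm, hxT, h⟩)
    rw [hM.2 hins (subset_insert x M)]
    exact mem_insert x M
  have hMcl : IsClosed M := by
    apply isClosed_of_closure_subset
    intro x hx
    apply hMmax x (closure_minimal hMT hTcl hx)
    intro m hm
    have hcl : IsClosed {w : V | m - w ∈ C ∨ w - m ∈ C} :=
      (hCclosed.preimage (f := fun w => m - w) (by fun_prop)).union
        (hCclosed.preimage (f := fun w => w - m) (by fun_prop))
    exact closure_minimal (fun w hw => hMch w hw m hm) hcl hx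
  have hMc : IsCompact M := hIc.of_isClosed_subset hMcl (fun m hm => (hMT hm).1)
  -- no gaps
  have hgap : ∀ A A' : Set V, IsClosed A → IsClosed A' → M ⊆ A ∪ A' → (M ∩ A).Nonempty →
      z ∈ A' → (M ∩ (A ∩ A')).Nonempty := by
    intro A A' hA hA' hcov hAne hzA'
    by_contra hdis
    rw [Set.not_nonempty_iff_eq_empty] at hdis
    have hdis' : ∀ m ∈ M, m ∈ A → m ∈ A' → False := fun m h1 h2 h3 => by
      have : m ∈ M ∩ (A ∩ A') := ⟨h1, h2, h3⟩
      rw [hdis] at this; exact this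
    obtain ⟨a, haA, hamax⟩ := exists_greatest_of_chain C h0 hadd hCclosed (M ∩ A)
      (hMc.inter_right hA) hAne (fun a ha b hb => hMch a ha.1 b hb.1)
    have haI := (hMT haA.1).1
    have hcl : IsClosed {x : V | x - a ∈ C} := hCclosed.preimage (f := fun x => x - a) (by fun_prop)
    obtain ⟨b, hbA, hbmin⟩ := exists_greatest_of_chain (-C) (by simpa using h0)
      (fun x hx y hy => by
          have := hadd _ hx _ hy
          rw [Set.mem_neg]; rwa [neg_add]) hCclosed.neg ((M ∩ A') ∩ {x : V | x - a ∈ C})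
      ((hMc.inter_right hA').inter_right hcl) ⟨z, ⟨hzM, hzA'⟩, haI.2⟩
      (fun a ha b hb => by
        simp only [Set.mem_neg, neg_sub]
        exact hMch b hb.1.1 a ha.1.1)
    simp only [Set.mem_neg, neg_sub] at hbmin
    have hbI := (hMT hbA.1.1).1
    have hne : a ≠ b := fun e => hdis' a haA.1 haA.2 (e ▸ hbA.1.2)
    have hsub : {v : V | v - a ∈ C ∧ b - v ∈ C} ⊆ I := fun v hv =>
      ⟨htr _ _ _ hv.1 haI.1, htr _ _ _ hbI.2 hv.2⟩
    have hmaps : MapsTo G {v : V | v - a ∈ C ∧ b - v ∈ C} {v : V | v - a ∈ C ∧ b - v ∈ C} := by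
      intro v hv
      have hvΩ := hint (hsub hv)
      have h1 := hGm a (hint haI) v hvΩ hv.1
      have h2 := hGm v hvΩ b (hint hbI) hv.2
      rw [(hMT haA.1).2] at h1
      rw [(hMT hbA.1.1).2] at h2
      exact ⟨h1, h2⟩
    obtain ⟨x, hax, hxb, hxa, hxb', hxc⟩ := exists_comparable_point C hCconv h0 hCscal a b hbA.2 hne
      (isCompact_orderInterval C hCscal hpt hCclosed a b) G (hGc.mono (hsub.trans hint)) hmaps
    have hxI : x ∈ I := hsub ⟨hax, hxb⟩
    have hxM : x ∈ M := by
      apply hMmax x ⟨hxI, hGcomp x (hint hxI) hxc⟩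
      intro m hm
      rcases hcov hm with h | h
      · exact Or.inr (htr _ _ _ hax (hamax m ⟨hm, h⟩))
      · rcases hMch a haA.1 m hm with h' | h'
        · exact Or.inl (htr _ _ _ (hbmin m ⟨⟨hm, h⟩, h'⟩) hxb)
        · exact Or.inr (htr _ _ _ hax h')
    rcases hcov hxM with h | h
    · exact hxa (hanti _ _ hax (hamax x ⟨hxM, h⟩))
    · exact hxb' (hanti _ _ (hbmin x ⟨⟨hxM, h⟩, hax⟩) hxb)
  refine ⟨M, fun m hm => hint (hMT hm).1, fun m hm => hGfix m _ (hMT hm).2, hMch,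
    ⟨⟨y, hyM⟩, ?_⟩, hyM, hzM, fun m hm => (hMT hm).1⟩
  rw [isPreconnected_closed_iff]
  intro A A' hA hA' hcov hAne hAne'
  rcases hcov hzM with h | h
  · rw [inter_comm A A']
    exact hgap A' A hA' hA (by rwa [union_comm]) hAne' h
  · exact hgap A A' hA hA' hcov hAne h
end
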